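/- arXiv:0904.2414 — 2 statements merged into one kernel-verified Lean document; each statement's English description precedes it below -/
import Mathlib

section
/- Let N ≥ 5 and suppose the extremal solution u* of (P)_λ is singular (sup_B u* = 1). Then 1 − u*(x) ≤ C₀|x|^{4/3} for all x ∈ B, where C₀ := (λ*/λ̄_N)^{1/3}. -/
open MeasureTheory Metric Set Filter

/-- The Laplacian of `u : ℝ^N → ℝ`, as the sum of pure second partial derivatives. -/
noncomputable def lap {N : ℕ} (u : EuclideanSpace ℝ (Fin N) → ℝ) (x : EuclideanSpace ℝ (Fin N)) : ℝ :=
  ∑ i : Fin N, fderiv ℝ (fun y => fderiv ℝ u y (EuclideanSpace.single i 1)) x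
    (EuclideanSpace.single i 1)

/-- The biharmonic operator `Δ²`. -/
noncomputable def biharm {N : ℕ} (u : EuclideanSpace ℝ (Fin N) → ℝ)
    (x : EuclideanSpace ℝ (Fin N)) : ℝ :=
  lap (lap u) x

/-- A classical solution of `(P)_λ` on the unit ball `B ⊆ ℝ^N`:
`u ∈ C⁴(B̄)`, `0 < u < 1` in `B`, `Δ²u = λ (1-u)⁻²` in `B`, and `u = 0`, `∂_ν u = 0` on `∂B`. -/
structure IsClassicalSolution (N : ℕ) (lam : ℝ) (u : EuclideanSpace ℝ (Fin N) → ℝ) : Prop where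
  contDiffOn : ContDiffOn ℝ 4 u (closedBall (0 : EuclideanSpace ℝ (Fin N)) 1)
  pos : ∀ x ∈ ball (0 : EuclideanSpace ℝ (Fin N)) 1, 0 < u x
  lt_one : ∀ x ∈ ball (0 : EuclideanSpace ℝ (Fin N)) 1, u x < 1
  eqn : ∀ x ∈ ball (0 : EuclideanSpace ℝ (Fin N)) 1, biharm u x = lam / (1 - u x) ^ 2
  bdry : ∀ x : EuclideanSpace ℝ (Fin N), ‖x‖ = 1 → u x = 0
  bdry_deriv : ∀ x : EuclideanSpace ℝ (Fin N), ‖x‖ = 1 →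
    fderivWithin ℝ u (closedBall (0 : EuclideanSpace ℝ (Fin N)) 1) x x = 0

/-- The set of voltages `λ > 0` for which `(P)_λ` admits a classical solution;
the pull-in voltage `λ*` is its supremum. -/
def solSet (N : ℕ) : Set ℝ := {lam | 0 < lam ∧ ∃ u, IsClassicalSolution N lam u}

/-- `λ̄_N = (8/9)(N - 2/3)(N - 8/3)`. -/
noncomputable def lamBar (N : ℕ) : ℝ := (8 / 9) * ((N : ℝ) - 2 / 3) * ((N : ℝ) - 8 / 3)

/-!
Minimal solutions are radial, and in the variable `t = |x|²` the equation becomes an ordinary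
differential equation for which the maximum principle follows from integrating twice the derivative
of the flux `t^(N/2) u'`. Let `u < v` be the minimal solutions for `λ < μ`, and compare the gap
`1 - u` with the profile `C |x|^(4/3)`, whose bilaplacian matches that of a gap at voltage
`C³ λ̄_N`; suppose `λ ≤ C³ λ̄_N`. The difference `v - u` is a positive supersolution of the
linearization at `u`, so a maximum principle holds for this linearization. By convexity of `s ↦ s⁻²`
it keeps the profile under the gap inside any radius at which the profile is under the gap and grows
at least as fast. There `Δ²` of the gap minus the profile has a sign, so this difference is at most
its value `1 - u(0)` at the origin. The difference does not exceed its value at some such radius, or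
at one where the profile is above the gap, so that `u(0) - u(x) ≤ C |x|^(4/3)` on the whole ball,
and the theorem follows by letting `λ → λ*`. That `0 < λ* < ∞` comes from a contraction with the
Green operator, and from testing the equation against a bump function.
-/

open scoped Topology Interval NNReal BoundedContinuousFunction

section RadialLaplacian

variable {d R S l : ℝ} {g g' h k k' m : ℝ → ℝ}

/-- The radial Laplacian on the ball `|x|² < R` of dimension `d`, in the variable `t = |x|²`:
`g'` is the derivative of `g`, and `h (|x|²)` is the Laplacian of `g (|x|²)`.
Regularity is only asked for on `0 < t < R`; the vanishing of the flux at the origin excludes the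
fundamental solution. -/
structure HasRadialLap (d R : ℝ) (g g' h : ℝ → ℝ) : Prop where
  hasDerivAt : ∀ t ∈ Ioo 0 R, HasDerivAt g (g' t) t
  exists_hasDerivAt : ∀ t ∈ Ioo 0 R, ∃ g'', HasDerivAt g' g'' t ∧ h t = 4 * t * g'' + 2 * d * g' t
  tendsto_flux : Tendsto (fun t => t ^ (d / 2) * g' t) (𝓝[>] 0) (𝓝 0)

namespace HasRadialLap

lemma mono (a : HasRadialLap d R g g' h) (hS : S ≤ R) : HasRadialLap d S g g' h where
  hasDerivAt t ht := a.hasDerivAt t (Ioo_subset_Ioo_right hS ht)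
  exists_hasDerivAt t ht := a.exists_hasDerivAt t (Ioo_subset_Ioo_right hS ht)
  tendsto_flux := a.tendsto_flux

lemma sub (a : HasRadialLap d R g g' h) (b : HasRadialLap d R k k' m) :
    HasRadialLap d R (fun t => g t - k t) (fun t => g' t - k' t) (fun t => h t - m t) where
  hasDerivAt t ht := (a.hasDerivAt t ht).sub (b.hasDerivAt t ht)
  exists_hasDerivAt t ht := by
    obtain ⟨g'', hg, hh⟩ := a.exists_hasDerivAt t ht
    obtain ⟨k'', hk, hm⟩ := b.exists_hasDerivAt t ht
    exact ⟨g'' - k'', hg.sub hk, by rw [hh, hm]; ring⟩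
  tendsto_flux := by simpa [mul_sub] using a.tendsto_flux.sub b.tendsto_flux

lemma const_mul (c : ℝ) (a : HasRadialLap d R g g' h) :
    HasRadialLap d R (fun t => c * g t) (fun t => c * g' t) (fun t => c * h t) where
  hasDerivAt t ht := (a.hasDerivAt t ht).const_mul c
  exists_hasDerivAt t ht := by
    obtain ⟨g'', hg, hh⟩ := a.exists_hasDerivAt t ht
    exact ⟨c * g'', hg.const_mul c, by rw [hh]; ring⟩
  tendsto_flux := by simpa [mul_left_comm] using a.tendsto_flux.const_mul c

lemma congr (a : HasRadialLap d R g g' h) (hm : ∀ t ∈ Ioo 0 R, m t = h t) :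
    HasRadialLap d R g g' m where
  hasDerivAt := a.hasDerivAt
  exists_hasDerivAt t ht := by
    obtain ⟨g'', hg, hh⟩ := a.exists_hasDerivAt t ht
    exact ⟨g'', hg, (hm t ht).trans hh⟩
  tendsto_flux := a.tendsto_flux

lemma of_tendsto (hd : 0 < d) (hg : ∀ t ∈ Ioo 0 R, HasDerivAt g (g' t) t)
    (hg' : ∀ t ∈ Ioo 0 R, ∃ g'', HasDerivAt g' g'' t ∧ h t = 4 * t * g'' + 2 * d * g' t)
    (hl : Tendsto g' (𝓝[>] 0) (𝓝 l)) : HasRadialLap d R g g' h where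
  hasDerivAt := hg
  exists_hasDerivAt := hg'
  tendsto_flux := by
    have hpow : Tendsto (fun t : ℝ => t ^ (d / 2)) (𝓝[>] 0) (𝓝 0) := by
      have h0 := (Real.continuousAt_rpow_const 0 (d / 2) (.inr (by positivity))).tendsto
      rw [Real.zero_rpow (by positivity)] at h0
      exact h0.mono_left nhdsWithin_le_nhds
    simpa using hpow.mul hl

lemma const (d R c : ℝ) : HasRadialLap d R (fun _ => c) (fun _ => 0) (fun _ => 0) where
  hasDerivAt t _ := hasDerivAt_const t c
  exists_hasDerivAt t _ := ⟨0, hasDerivAt_const t 0, by simp⟩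
  tendsto_flux := by simp

lemma rpow (R : ℝ) {a : ℝ} (ha : 0 < d / 2 + a - 1) :
    HasRadialLap d R (fun t => t ^ a) (fun t => a * t ^ (a - 1))
      (fun t => 2 * a * (2 * a - 2 + d) * t ^ (a - 1)) where
  hasDerivAt t ht := Real.hasDerivAt_rpow_const (.inl ht.1.ne')
  exists_hasDerivAt t ht := by
    refine ⟨a * ((a - 1) * t ^ (a - 1 - 1)),
      (Real.hasDerivAt_rpow_const (.inl ht.1.ne')).const_mul a, ?_⟩
    have hpow : t ^ (a - 1) = t * t ^ (a - 1 - 1) := by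
      rw [Real.rpow_sub_one ht.1.ne' (a - 1), mul_div_cancel₀ _ ht.1.ne']
    rw [hpow]
    ring
  tendsto_flux := by
    have h0 := (Real.continuousAt_rpow_const 0 (d / 2 + a - 1) (.inr ha.le)).tendsto
    rw [Real.zero_rpow ha.ne'] at h0
    have h1 := (h0.mono_left (nhdsWithin_le_nhds (s := Ioi 0))).const_mul a
    rw [mul_zero] at h1
    refine h1.congr' ?_
    filter_upwards [self_mem_nhdsWithin] with t ht
    rw [add_sub_assoc, Real.rpow_add ht]
    ring

lemma hasDerivAt_flux (a : HasRadialLap d R g g' h) {t : ℝ} (ht : t ∈ Ioo 0 R) :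
    HasDerivAt (fun t => t ^ (d / 2) * g' t) (t ^ (d / 2 - 1) * h t / 4) t := by
  obtain ⟨g'', hg, hh⟩ := a.exists_hasDerivAt t ht
  refine ((Real.hasDerivAt_rpow_const (p := d / 2) (.inl ht.1.ne')).fun_mul hg).congr_deriv ?_
  have := ht.1.ne'
  rw [hh, Real.rpow_sub_one this]
  field_simp
  ring

lemma monotoneOn_flux (a : HasRadialLap d R g g' h) {s : Set ℝ} (hs : Convex ℝ s)
    (hsR : s ⊆ Ioo 0 R) (hh : ∀ t ∈ s, 0 ≤ h t) :
    MonotoneOn (fun t => t ^ (d / 2) * g' t) s := by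
  have hderiv := fun t ht => a.hasDerivAt_flux (hsR (a := t) ht)
  refine monotoneOn_of_deriv_nonneg hs (fun t ht => (hderiv t ht).continuousAt.continuousWithinAt)
    (fun t ht => (hderiv t (interior_subset ht)).differentiableAt.differentiableWithinAt)
    fun t ht => ?_
  rw [(hderiv t (interior_subset ht)).deriv]
  have := hh t (interior_subset ht)
  have := (hsR (interior_subset ht)).1
  positivity

lemma deriv_nonneg_of_nonneg (a : HasRadialLap d R g g' h) {s : ℝ} (hs : s ∈ Ioo 0 R)
    (hh : ∀ t ∈ Ioc 0 s, 0 ≤ h t) : 0 ≤ g' s := by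
  have hmono := a.monotoneOn_flux (convex_Ioc 0 s) (Ioc_subset_Ioo_right hs.2) hh
  have hflux : 0 ≤ s ^ (d / 2) * g' s := by
    refine le_of_tendsto a.tendsto_flux ?_
    filter_upwards [Ioc_mem_nhdsGT hs.1] with t ht
    exact hmono ht ⟨hs.1, le_rfl⟩ ht.2
  exact nonneg_of_mul_nonneg_right hflux (Real.rpow_pos_of_pos hs.1 _)

lemma monotoneOn_of_nonneg (a : HasRadialLap d R g g' h) (hh : ∀ t ∈ Ioo 0 R, 0 ≤ h t) :
    MonotoneOn g (Ioo 0 R) := by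
  refine monotoneOn_of_deriv_nonneg (convex_Ioo 0 R)
    (fun t ht => (a.hasDerivAt t ht).continuousAt.continuousWithinAt)
    (fun t ht => (a.hasDerivAt t (interior_subset ht)).differentiableAt.differentiableWithinAt)
    fun t ht => ?_
  have ht := interior_subset ht
  rw [(a.hasDerivAt t ht).deriv]
  exact a.deriv_nonneg_of_nonneg ht fun r hr => hh r (Ioc_subset_Ioo_right ht.2 hr)

/- A monotone Laplacian changes sign at most once: up to a point where it is nonpositive the flux
decreases from `0`, beyond a point where it is positive the flux increases to its end value. -/
lemma deriv_nonpos_of_monotoneOn (a : HasRadialLap d R g g' h) (hh : MonotoneOn h (Ioo 0 R))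
    (hl : Tendsto g' (𝓝[<] R) (𝓝 l)) (hl0 : l ≤ 0) {s : ℝ} (hs : s ∈ Ioo 0 R) : g' s ≤ 0 := by
  rcases le_total (h s) 0 with hneg | hpos
  · have := (a.const_mul (-1)).deriv_nonneg_of_nonneg hs fun t ht => by
      linarith [hh (Ioc_subset_Ioo_right hs.2 ht) hs ht.2]
    linarith
  · have hsub : Ico s R ⊆ Ioo 0 R := fun t ht => ⟨hs.1.trans_le ht.1, ht.2⟩
    have hmono := a.monotoneOn_flux (convex_Ico s R) hsub fun t ht =>
      hpos.trans (hh hs (hsub ht) ht.1)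
    have hR : 0 < R := hs.1.trans hs.2
    have hend : Tendsto (fun t => t ^ (d / 2) * g' t) (𝓝[<] R) (𝓝 (R ^ (d / 2) * l)) :=
      ((Real.continuousAt_rpow_const R (d / 2) (.inl hR.ne')).tendsto.mono_left
        nhdsWithin_le_nhds).mul hl
    have hflux : s ^ (d / 2) * g' s ≤ R ^ (d / 2) * l := by
      refine ge_of_tendsto hend ?_
      filter_upwards [Ico_mem_nhdsLT hs.2] with t ht
      exact hmono ⟨le_rfl, hs.2⟩ ht ht.1
    have : R ^ (d / 2) * l ≤ 0 := mul_nonpos_of_nonneg_of_nonpos (by positivity) hl0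
    exact nonpos_of_mul_nonpos_right (hflux.trans this) (Real.rpow_pos_of_pos hs.1 _)

lemma tendsto_deriv (a : HasRadialLap d R g g' h) {t : ℝ} (ht : t ∈ Ioo 0 R) :
    Tendsto g' (𝓝[<] t) (𝓝 (g' t)) := by
  obtain ⟨g'', hg, -⟩ := a.exists_hasDerivAt t ht
  exact hg.continuousAt.tendsto.mono_left nhdsWithin_le_nhds

end HasRadialLap

/-- The radial bilaplacian: `F (|x|²)` is the bilaplacian of `g (|x|²)`, and `g'` is the derivative
of `g`. -/
def HasRadialBilap (d R : ℝ) (g g' F : ℝ → ℝ) : Prop :=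
  ∃ h h', HasRadialLap d R g g' h ∧ HasRadialLap d R h h' F

namespace HasRadialBilap

variable {F G : ℝ → ℝ}

lemma hasDerivAt (a : HasRadialBilap d R g g' F) {t : ℝ} (ht : t ∈ Ioo 0 R) :
    HasDerivAt g (g' t) t :=
  let ⟨_, _, hg, _⟩ := a
  hg.hasDerivAt t ht

lemma tendsto_deriv (a : HasRadialBilap d R g g' F) {t : ℝ} (ht : t ∈ Ioo 0 R) :
    Tendsto g' (𝓝[<] t) (𝓝 (g' t)) :=
  let ⟨_, _, hg, _⟩ := a
  hg.tendsto_deriv ht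

lemma mono (a : HasRadialBilap d R g g' F) (hS : S ≤ R) : HasRadialBilap d S g g' F :=
  let ⟨h, h', hg, hh⟩ := a
  ⟨h, h', hg.mono hS, hh.mono hS⟩

lemma sub (a : HasRadialBilap d R g g' F) (b : HasRadialBilap d R k k' G) :
    HasRadialBilap d R (fun t => g t - k t) (fun t => g' t - k' t) (fun t => F t - G t) :=
  let ⟨_, _, hg, hh⟩ := a
  let ⟨_, _, hk, hm⟩ := b
  ⟨_, _, hg.sub hk, hh.sub hm⟩

lemma const_mul (c : ℝ) (a : HasRadialBilap d R g g' F) :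
    HasRadialBilap d R (fun t => c * g t) (fun t => c * g' t) (fun t => c * F t) :=
  let ⟨_, _, hg, hh⟩ := a
  ⟨_, _, hg.const_mul c, hh.const_mul c⟩

lemma congr (a : HasRadialBilap d R g g' F) (hG : ∀ t ∈ Ioo 0 R, G t = F t) :
    HasRadialBilap d R g g' G :=
  let ⟨h, h', hg, hh⟩ := a
  ⟨h, h', hg, hh.congr hG⟩

lemma const (d R c : ℝ) : HasRadialBilap d R (fun _ => c) (fun _ => 0) (fun _ => 0) :=
  ⟨_, _, .const d R c, .const d R 0⟩

lemma one_sub_sq (hd : 0 < d) (R : ℝ) :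
    HasRadialBilap d R (fun t => (1 - t) ^ 2) (fun t => -2 * (1 - t))
      (fun _ => 8 * d * (d + 2)) := by
  have hlin (t : ℝ) : HasDerivAt (fun t => -2 * (1 - t)) 2 t := by
    simpa using ((hasDerivAt_id t).const_sub 1).const_mul (-2)
  refine ⟨fun t => (8 + 4 * d) * t - 4 * d, fun _ => 8 + 4 * d,
    .of_tendsto (l := -2) hd (fun t _ => ?_) (fun t _ => ⟨2, hlin t, by ring⟩) ?_,
    .of_tendsto hd (fun t _ => ?_) (fun t _ => ⟨0, hasDerivAt_const _ _, by ring⟩)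
      tendsto_const_nhds⟩
  · simpa using ((hasDerivAt_id t).const_sub 1).fun_pow 2
  · simpa using (hlin 0).continuousAt.tendsto.mono_left (nhdsWithin_le_nhds (s := Ioi 0))
  · simpa using ((hasDerivAt_id t).const_mul (8 + 4 * d)).sub_const (4 * d)

lemma rpow (R : ℝ) {a : ℝ} (ha : 0 < d / 2 + a - 2) :
    HasRadialBilap d R (fun t => t ^ a) (fun t => a * t ^ (a - 1))
      (fun t => 4 * a * (a - 1) * (2 * a - 2 + d) * (2 * a - 4 + d) * t ^ (a - 2)) := by
  refine ⟨_, _, .rpow R (by linarith),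
    ((HasRadialLap.rpow R (by linarith)).const_mul _).congr fun t _ => ?_⟩
  rw [show a - 1 - 1 = a - 2 by ring]
  ring

lemma deriv_nonpos (a : HasRadialBilap d R g g' F) (hF : ∀ t ∈ Ioo 0 R, 0 ≤ F t)
    (hl : Tendsto g' (𝓝[<] R) (𝓝 l)) (hl0 : l ≤ 0) {t : ℝ} (ht : t ∈ Ioo 0 R) : g' t ≤ 0 :=
  let ⟨_, _, hg, hh⟩ := a
  hg.deriv_nonpos_of_monotoneOn (hh.monotoneOn_of_nonneg hF) hl hl0 ht

lemma antitoneOn (a : HasRadialBilap d R g g' F) (hF : ∀ t ∈ Ioo 0 R, 0 ≤ F t)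
    (hl : Tendsto g' (𝓝[<] R) (𝓝 l)) (hl0 : l ≤ 0) (hg : ContinuousOn g (Icc 0 R)) :
    AntitoneOn g (Icc 0 R) := by
  refine antitoneOn_of_deriv_nonpos (convex_Icc 0 R) hg
    (fun t ht => ?_) fun t ht => ?_ <;> rw [interior_Icc] at ht
  · exact (a.hasDerivAt ht).differentiableAt.differentiableWithinAt
  · exact (a.hasDerivAt ht).deriv ▸ a.deriv_nonpos hF hl hl0 ht

lemma pos_of_pos (hd : 0 < d) {ε : ℝ} (hε : 0 < ε) (a : HasRadialBilap d 1 g g' F)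
    (hF : ∀ t ∈ Ioo (0 : ℝ) 1, ε ≤ F t) (hg : ContinuousOn g (Icc 0 1)) (hg1 : g 1 = 0)
    (hl : Tendsto g' (𝓝[<] 1) (𝓝 0)) {t : ℝ} (ht : t ∈ Ico (0 : ℝ) 1) : 0 < g t := by
  set κ := ε / (8 * d * (d + 2))
  have hκ : κ * (8 * d * (d + 2)) = ε := by simp only [κ]; field_simp
  have hanti : AntitoneOn (fun t => g t - κ * (1 - t) ^ 2) (Icc 0 1) := by
    refine (a.sub ((one_sub_sq hd 1).const_mul κ)).antitoneOn (l := 0)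
      (fun t ht => by linarith [hF t ht]) ?_ le_rfl (by fun_prop)
    have : Tendsto (fun t : ℝ => κ * (-2 * (1 - t))) (𝓝[<] 1) (𝓝 (κ * (-2 * (1 - 1)))) :=
      Tendsto.mono_left (Continuous.tendsto (by fun_prop) 1) nhdsWithin_le_nhds
    simpa using hl.sub this
  have := hanti (Ico_subset_Icc_self ht) (right_mem_Icc.2 zero_le_one) ht.2.le
  have hsq : 0 < κ * (1 - t) ^ 2 := by
    have := sub_pos.2 ht.2
    positivity
  simp only [hg1, sub_self] at this
  linarith

/- With `τ` the largest value of `ψ / φ`, the difference `τ φ - ψ` is decreasing, yet it vanishes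
where that value is attained and is positive at `R`. -/
lemma nonpos_of_le_of_ge {φ φ' Φ ψ ψ' Ψ V : ℝ → ℝ} {α β : ℝ} (hR : 0 ≤ R)
    (hφ : HasRadialBilap d R φ φ' Φ) (hψ : HasRadialBilap d R ψ ψ' Ψ)
    (hφc : ContinuousOn φ (Icc 0 R)) (hψc : ContinuousOn ψ (Icc 0 R))
    (hV : ∀ t ∈ Ioo 0 R, 0 ≤ V t) (hΦ : ∀ t ∈ Ioo 0 R, V t * φ t ≤ Φ t)
    (hΨ : ∀ t ∈ Ioo 0 R, Ψ t ≤ V t * ψ t) (hpos : ∀ t ∈ Icc 0 R, 0 < φ t)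
    (hα : Tendsto φ' (𝓝[<] R) (𝓝 α)) (hα0 : α ≤ 0)
    (hβ : Tendsto ψ' (𝓝[<] R) (𝓝 β)) (hβ0 : 0 ≤ β) (hψR : ψ R ≤ 0)
    {t : ℝ} (ht : t ∈ Icc 0 R) : ψ t ≤ 0 := by
  obtain ⟨t₀, ht₀, hmax⟩ := isCompact_Icc.exists_isMaxOn ⟨t, ht⟩
    (hψc.div hφc fun s hs => (hpos s hs).ne')
  set τ := ψ t₀ / φ t₀
  have hle : ∀ s ∈ Icc 0 R, ψ s ≤ τ * φ s := fun s hs => (div_le_iff₀ (hpos s hs)).1 (hmax hs)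
  by_contra! hψt
  have hτ0 : 0 < τ := pos_of_mul_pos_left (hψt.trans_le (hle t ht)) (hpos t ht).le
  have hanti : AntitoneOn (fun s => τ * φ s - ψ s) (Icc 0 R) := by
    refine ((hφ.const_mul τ).sub hψ).antitoneOn (fun s hs => ?_) ((hα.const_mul τ).sub hβ)
      (by nlinarith) ((hφc.const_mul τ).sub hψc)
    have h1 := mul_le_mul_of_nonneg_left (hΦ s hs) hτ0.le
    have h2 := mul_le_mul_of_nonneg_left (hle s (Ioo_subset_Icc_self hs)) (hV s hs)
    linarith [hΨ s hs]
  have hend := hanti ht₀ (right_mem_Icc.2 hR) ht₀.2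
  have hzero : τ * φ t₀ = ψ t₀ := div_mul_cancel₀ _ (hpos t₀ ht₀).ne'
  have hRpos := mul_pos hτ0 (hpos R (right_mem_Icc.2 hR))
  simp only [hzero, sub_self] at hend
  linarith

end HasRadialBilap

end RadialLaplacian

lemma exists_deriv_nonpos_of_deriv_right_nonpos {f f' : ℝ → ℝ} {a b : ℝ} (hab : a ≤ b)
    (hf : ∀ t ∈ Icc a b, HasDerivAt f (f' t) t) (hb : f' b ≤ 0) :
    ∃ T ∈ Icc a b, f a ≤ f T ∧ f' T ≤ 0 := by
  obtain ⟨T, hT, hmax⟩ := isCompact_Icc.exists_isMaxOn (nonempty_Icc.2 hab)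
    (HasDerivAt.continuousOn hf)
  refine ⟨T, hT, hmax (left_mem_Icc.2 hab), ?_⟩
  rcases hT.2.eq_or_lt with rfl | hTb
  · exact hb
  · have hcone : b - T ∈ posTangentConeAt (Icc a b) T :=
      sub_mem_posTangentConeAt_of_segment_subset
        ((convex_Icc a b).segment_subset hT (right_mem_Icc.2 hab))
    have := hmax.localize.hasFDerivWithinAt_nonpos
      (hf T hT).hasFDerivAt.hasFDerivWithinAt hcone
    simp only [ContinuousLinearMap.toSpanSingleton_apply, smul_eq_mul] at this
    exact nonpos_of_mul_nonpos_right this (sub_pos.2 hTb)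

section RadialSolution

lemma inv_sq_add_two_div_cube_mul_le {w z : ℝ} (hw : 0 < w) (hz : 0 < z) :
    1 / w ^ 2 + 2 / w ^ 3 * (w - z) ≤ 1 / z ^ 2 := by
  have key : 1 / z ^ 2 - (1 / w ^ 2 + 2 / w ^ 3 * (w - z)) =
      (w - z) ^ 2 * (w + 2 * z) / (w ^ 3 * z ^ 2) := by
    field_simp
    ring
  have : 0 ≤ (w - z) ^ 2 * (w + 2 * z) / (w ^ 3 * z ^ 2) := by positivity
  linarith

variable {d l l' C T t : ℝ} {g g' k k' : ℝ → ℝ}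

/-- The constant of the bilaplacian of the singular profile `|x|^(4/3)`: this is `λ̄_N` for `d = N`,
see `lamBar`. -/
noncomputable def profileConst (d : ℝ) : ℝ := (8 / 9) * (d - 2 / 3) * (d - 8 / 3)

lemma hasRadialBilap_profile (hd : 8 / 3 < d) (C : ℝ) :
    HasRadialBilap d 1 (fun t => C * t ^ (2 / 3 : ℝ)) (fun t => C * (2 / 3 * t ^ (2 / 3 - 1 : ℝ)))
      (fun t => -(C ^ 3 * profileConst d / (C * t ^ (2 / 3 : ℝ)) ^ 2)) := by
  refine ((HasRadialBilap.rpow 1 (a := 2 / 3) (by linarith)).const_mul C).congr fun t ht => ?_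
  have hpow : t ^ (2 / 3 - 2 : ℝ) * (t ^ (2 / 3 : ℝ)) ^ 2 = 1 := by
    rw [← Real.rpow_natCast, ← Real.rpow_mul ht.1.le, ← Real.rpow_add ht.1]
    norm_num
  have ht0 : t ^ (2 / 3 : ℝ) ≠ 0 := (Real.rpow_pos_of_pos ht.1 _).ne'
  rcases eq_or_ne C 0 with rfl | hC
  · simp
  · rw [eq_div_of_mul_eq (pow_ne_zero 2 ht0) hpow, profileConst]
    field_simp
    ring

/-- `g (|x|²)` is a radial solution of `(P)_l` in dimension `d`, and `g'` is the derivative of `g`.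
Nonnegativity is automatic. -/
structure IsRadialSolution (d l : ℝ) (g g' : ℝ → ℝ) : Prop where
  bilap : HasRadialBilap d 1 g g' fun t => l / (1 - g t) ^ 2
  continuousOn : ContinuousOn g (Icc 0 1)
  lt_one : ∀ t ∈ Ico (0 : ℝ) 1, g t < 1
  map_one : g 1 = 0
  tendsto_deriv : Tendsto g' (𝓝[<] 1) (𝓝 0)

namespace IsRadialSolution

lemma antitoneOn (a : IsRadialSolution d l g g') (hl : 0 ≤ l) : AntitoneOn g (Icc 0 1) :=
  a.bilap.antitoneOn (fun _ _ => by positivity) a.tendsto_deriv le_rfl a.continuousOn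

lemma nonneg (a : IsRadialSolution d l g g') (hl : 0 ≤ l) (ht : t ∈ Icc (0 : ℝ) 1) : 0 ≤ g t :=
  a.map_one ▸ a.antitoneOn hl ht (right_mem_Icc.2 zero_le_one) ht.2

lemma bilap_sub (a : IsRadialSolution d l g g') (b : IsRadialSolution d l' k k') :
    HasRadialBilap d 1 (fun t => k t - g t) (fun t => k' t - g' t)
      (fun t => l' / (1 - k t) ^ 2 - l / (1 - g t) ^ 2) :=
  b.bilap.sub a.bilap

lemma sub_le_div_sub_div (b : IsRadialSolution d l' k k') (hl : 0 ≤ l) (hll : l ≤ l')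
    (hgk : ∀ t ∈ Ioo (0 : ℝ) 1, g t ≤ k t) (ht : t ∈ Ioo (0 : ℝ) 1) :
    l' - l ≤ l' / (1 - k t) ^ 2 - l / (1 - g t) ^ 2 := by
  have hk1 : 0 < 1 - k t := sub_pos.2 (b.lt_one t (Ioo_subset_Ico_self ht))
  have hk0 := b.nonneg (hl.trans hll) (Ioo_subset_Icc_self ht)
  calc l' - l ≤ (l' - l) / (1 - k t) ^ 2 :=
        le_div_self (sub_nonneg.2 hll) (by positivity) (pow_le_one₀ hk1.le (by linarith))
    _ = l' / (1 - k t) ^ 2 - l / (1 - k t) ^ 2 := sub_div _ _ _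
    _ ≤ l' / (1 - k t) ^ 2 - l / (1 - g t) ^ 2 := by
        have := hgk t ht
        gcongr

/- Convexity of the nonlinearity: the difference of two ordered solutions is a supersolution of the
linearization at the lower one. -/
lemma linearization_mul_sub_le (a : IsRadialSolution d l g g')
    (b : IsRadialSolution d l' k k') (hl : 0 ≤ l) (hll : l ≤ l') (ht : t ∈ Ioo (0 : ℝ) 1) :
    2 * l / (1 - g t) ^ 3 * (k t - g t) ≤ l' / (1 - k t) ^ 2 - l / (1 - g t) ^ 2 := by
  have hg1 : 0 < 1 - g t := sub_pos.2 (a.lt_one t (Ioo_subset_Ico_self ht))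
  have hk1 : 0 < 1 - k t := sub_pos.2 (b.lt_one t (Ioo_subset_Ico_self ht))
  have htangent := mul_le_mul_of_nonneg_left (inv_sq_add_two_div_cube_mul_le hg1 hk1) hl
  have hmono : l / (1 - k t) ^ 2 ≤ l' / (1 - k t) ^ 2 := by gcongr
  have : l * (1 / (1 - g t) ^ 2 + 2 / (1 - g t) ^ 3 * (1 - g t - (1 - k t))) =
      l / (1 - g t) ^ 2 + 2 * l / (1 - g t) ^ 3 * (k t - g t) := by ring
  have : l * (1 / (1 - k t) ^ 2) = l / (1 - k t) ^ 2 := by ring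
  linarith

lemma sub_pos_of_le (a : IsRadialSolution d l g g') (b : IsRadialSolution d l' k k') (hd : 0 < d)
    (hl : 0 ≤ l) (hll : l < l') (hgk : ∀ t ∈ Ioo (0 : ℝ) 1, g t ≤ k t)
    (ht : t ∈ Ico (0 : ℝ) 1) : 0 < k t - g t :=
  (a.bilap_sub b).pos_of_pos hd (sub_pos.2 hll)
    (fun _ ht => b.sub_le_div_sub_div hl hll.le hgk ht) (b.continuousOn.sub a.continuousOn)
    (by rw [a.map_one, b.map_one, sub_zero])
    (by simpa using b.tendsto_deriv.sub a.tendsto_deriv) ht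

lemma deriv_sub_nonpos (a : IsRadialSolution d l g g') (b : IsRadialSolution d l' k k')
    (hl : 0 ≤ l) (hll : l ≤ l') (hgk : ∀ t ∈ Ioo (0 : ℝ) 1, g t ≤ k t) (ht : t ∈ Ioo (0 : ℝ) 1) :
    k' t - g' t ≤ 0 :=
  (a.bilap_sub b).deriv_nonpos
    (fun _ ht => (sub_nonneg.2 hll).trans (b.sub_le_div_sub_div hl hll hgk ht))
    (b.tendsto_deriv.sub a.tendsto_deriv) (sub_zero (0 : ℝ)).le ht

/- Maximum principle for the linearization at `g`, which has the positive supersolution `k - g`. -/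
lemma profile_le_one_sub (a : IsRadialSolution d l g g') (b : IsRadialSolution d l' k k')
    (hd : 8 / 3 < d) (hl : 0 ≤ l) (hll : l < l') (hgk : ∀ t ∈ Ioo (0 : ℝ) 1, g t ≤ k t)
    (hC : 0 < C) (hCl : l ≤ C ^ 3 * profileConst d) (hT : T ∈ Ioo (0 : ℝ) 1)
    (hT0 : C * T ^ (2 / 3 : ℝ) ≤ 1 - g T)
    (hT' : 0 ≤ C * (2 / 3 * T ^ (2 / 3 - 1 : ℝ)) + g' T) (ht : t ∈ Icc 0 T) :
    C * t ^ (2 / 3 : ℝ) ≤ 1 - g t := by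
  have hsub : Ioo 0 T ⊆ Ioo 0 1 := Ioo_subset_Ioo_right hT.2.le
  have hψ := (hasRadialBilap_profile hd C).sub ((HasRadialBilap.const d 1 1).sub a.bilap)
  have hgc : ContinuousOn g (Icc 0 T) := a.continuousOn.mono (Icc_subset_Icc_right hT.2.le)
  have hkc : ContinuousOn k (Icc 0 T) := b.continuousOn.mono (Icc_subset_Icc_right hT.2.le)
  refine sub_nonpos.1 <| HasRadialBilap.nonpos_of_le_of_ge (V := fun t => 2 * l / (1 - g t) ^ 3)
    (ψ := fun t => C * t ^ (2 / 3 : ℝ) - (1 - g t)) hT.1.le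
    ((a.bilap_sub b).mono hT.2.le) (hψ.mono hT.2.le) (hkc.sub hgc)
    (by fun_prop (disch := norm_num)) (fun t ht => ?_)
    (fun t ht => a.linearization_mul_sub_le b hl hll.le (hsub ht)) (fun t ht => ?_)
    (fun t ht => a.sub_pos_of_le b (by linarith) hl hll hgk ⟨ht.1, ht.2.trans_lt hT.2⟩)
    ((a.bilap_sub b).tendsto_deriv hT) (a.deriv_sub_nonpos b hl hll.le hgk hT)
    (hψ.tendsto_deriv hT) (by linarith) (sub_nonpos.2 hT0) ht
  all_goals have hg1 : 0 < 1 - g t := sub_pos.2 (a.lt_one t (Ioo_subset_Ico_self (hsub ht)))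
  · positivity
  · have hW : 0 < C * t ^ (2 / 3 : ℝ) := mul_pos hC (Real.rpow_pos_of_pos ht.1 _)
    have htangent := mul_le_mul_of_nonneg_left (inv_sq_add_two_div_cube_mul_le hg1 hW) hl
    have hconst : l * (1 / (C * t ^ (2 / 3 : ℝ)) ^ 2) ≤
        C ^ 3 * profileConst d / (C * t ^ (2 / 3 : ℝ)) ^ 2 := by
      rw [mul_one_div]
      gcongr
    simp only [zero_sub]
    linear_combination htangent + hconst

lemma one_sub_sub_profile_le (a : IsRadialSolution d l g g') (b : IsRadialSolution d l' k k')
    (hd : 8 / 3 < d) (hl : 0 ≤ l) (hll : l < l') (hgk : ∀ t ∈ Ioo (0 : ℝ) 1, g t ≤ k t)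
    (hC : 0 < C) (hCl : l ≤ C ^ 3 * profileConst d) (hT : T ∈ Ioo (0 : ℝ) 1)
    (hT0 : C * T ^ (2 / 3 : ℝ) ≤ 1 - g T)
    (hT' : 0 ≤ C * (2 / 3 * T ^ (2 / 3 - 1 : ℝ)) + g' T) :
    1 - g T - C * T ^ (2 / 3 : ℝ) ≤ 1 - g 0 := by
  have hD := ((HasRadialBilap.const d 1 1).sub a.bilap).sub (hasRadialBilap_profile hd C)
  have hgc : ContinuousOn g (Icc 0 T) := a.continuousOn.mono (Icc_subset_Icc_right hT.2.le)
  have hanti := (hD.mono hT.2.le).antitoneOn (fun t ht => ?_) (hD.tendsto_deriv hT)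
    (by linarith) (by fun_prop (disch := norm_num))
  · simpa using hanti (left_mem_Icc.2 hT.1.le) (right_mem_Icc.2 hT.1.le) hT.1.le
  · have hW : 0 < C * t ^ (2 / 3 : ℝ) := mul_pos hC (Real.rpow_pos_of_pos ht.1 _)
    have hle := a.profile_le_one_sub b hd hl hll hgk hC hCl hT hT0 hT' (Ioo_subset_Icc_self ht)
    have hCd : 0 ≤ C ^ 3 * profileConst d := hl.trans hCl
    have : l / (1 - g t) ^ 2 ≤ C ^ 3 * profileConst d / (C * t ^ (2 / 3 : ℝ)) ^ 2 := by gcongr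
    linarith

lemma exists_gap_le_and_deriv_gap_nonpos (a : IsRadialSolution d l g g') (hC : 0 < C)
    (ht : t ∈ Ioo (0 : ℝ) 1) :
    ∃ T ∈ Ioo (0 : ℝ) 1, 1 - g t - C * t ^ (2 / 3 : ℝ) ≤ 1 - g T - C * T ^ (2 / 3 : ℝ) ∧
      0 ≤ C * (2 / 3 * T ^ (2 / 3 - 1 : ℝ)) + g' T := by
  set D' : ℝ → ℝ := fun T => 0 - g' T - C * (2 / 3 * T ^ (2 / 3 - 1 : ℝ)) with hD'
  have hderiv : ∀ T ∈ Ioo (0 : ℝ) 1,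
      HasDerivAt (fun T => 1 - g T - C * T ^ (2 / 3 : ℝ)) (D' T) T := fun T hT =>
    ((hasDerivAt_const T (1 : ℝ)).sub (a.bilap.hasDerivAt hT)).sub
      ((Real.hasDerivAt_rpow_const (.inl hT.1.ne')).const_mul C)
  have hlim : Tendsto D' (𝓝[<] 1) (𝓝 (-(2 / 3 * C))) := by
    have hrpow := (Real.continuousAt_rpow_const 1 (2 / 3 - 1) (.inl one_ne_zero)).tendsto
    have := (a.tendsto_deriv.const_sub 0).sub
      (((hrpow.mono_left nhdsWithin_le_nhds).const_mul (2 / 3)).const_mul C)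
    convert this using 2
    rw [Real.one_rpow]
    ring
  obtain ⟨s, hs, hts⟩ := ((hlim.eventually_lt_const (u := 0) (by linarith)).and
    (Ioo_mem_nhdsLT ht.2)).exists
  have hsub : Icc t s ⊆ Ioo 0 1 := fun r hr => ⟨ht.1.trans_le hr.1, hr.2.trans_lt hts.2⟩
  obtain ⟨T, hT, hle, hT'⟩ := exists_deriv_nonpos_of_deriv_right_nonpos hts.1.le
    (fun r hr => hderiv r (hsub hr)) hs.le
  exact ⟨T, hsub hT, hle, by simp only [hD'] at hT'; linarith⟩

lemma center_sub_le (a : IsRadialSolution d l g g') (b : IsRadialSolution d l' k k')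
    (hd : 8 / 3 < d) (hl : 0 ≤ l) (hll : l < l') (hgk : ∀ t ∈ Ioo (0 : ℝ) 1, g t ≤ k t)
    (hC : 0 < C) (hCl : l ≤ C ^ 3 * profileConst d) (ht : t ∈ Ico (0 : ℝ) 1) :
    g 0 - g t ≤ C * t ^ (2 / 3 : ℝ) := by
  rcases ht.1.eq_or_lt with rfl | ht0
  · rw [sub_self, Real.zero_rpow (by norm_num), mul_zero]
  obtain ⟨T, hT, hle, hT'⟩ := a.exists_gap_le_and_deriv_gap_nonpos hC ⟨ht0, ht.2⟩
  rcases le_or_gt (C * T ^ (2 / 3 : ℝ)) (1 - g T) with hT0 | hT0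
  · linarith [a.one_sub_sub_profile_le b hd hl hll hgk hC hCl hT hT0 hT']
  · linarith [a.lt_one 0 ⟨le_rfl, one_pos⟩]

end IsRadialSolution

end RadialSolution

section Laplacian

variable {N : ℕ} {u v : EuclideanSpace ℝ (Fin N) → ℝ} {x : EuclideanSpace ℝ (Fin N)}

lemma contDiffAt_fderiv_apply {E : Type*} [NormedAddCommGroup E] [NormedSpace ℝ E] {f : E → ℝ}
    {x : E} {m n : WithTop ℕ∞} (hf : ContDiffAt ℝ n f x) (hmn : m + 1 ≤ n) (e : E) :
    ContDiffAt ℝ m (fun y => fderiv ℝ f y e) x :=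
  (hf.fderiv_right hmn).clm_apply contDiffAt_const

lemma contDiffAt_lap {m n : WithTop ℕ∞} (hu : ContDiffAt ℝ n u x) (hmn : m + 2 ≤ n) :
    ContDiffAt ℝ m (lap u) x :=
  ContDiffAt.sum fun _ _ => contDiffAt_fderiv_apply (contDiffAt_fderiv_apply (m := m + 1) hu
    (by rwa [add_assoc, one_add_one_eq_two]) _) le_rfl _

lemma lap_congr (h : u =ᶠ[𝓝 x] v) : lap u x = lap v x :=
  Finset.sum_congr rfl fun i _ => by
    have hfd : (fun y => fderiv ℝ u y (EuclideanSpace.single i 1)) =ᶠ[𝓝 x]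
        fun y => fderiv ℝ v y (EuclideanSpace.single i 1) :=
      h.fderiv.fun_comp (· (EuclideanSpace.single i 1))
    rw [hfd.fderiv_eq]

lemma lap_eq_laplacian (hu : ContDiffAt ℝ 2 u x) : lap u x = Laplacian.laplacian u x := by
  rw [InnerProductSpace.laplacian_eq_iteratedFDeriv_orthonormalBasis u
    (EuclideanSpace.basisFun (Fin N) ℝ)]
  refine Finset.sum_congr rfl fun i _ => ?_
  have hd : DifferentiableAt ℝ (fderiv ℝ u) x :=
    (hu.fderiv_right (m := 1) (by norm_num)).differentiableAt one_ne_zero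
  rw [iteratedFDeriv_two_apply, fderiv_clm_apply hd (differentiableAt_const _)]
  simp

lemma lap_comp_isometry (A : EuclideanSpace ℝ (Fin N) ≃ₗᵢ[ℝ] EuclideanSpace ℝ (Fin N))
    (hu : ContDiffAt ℝ 2 u (A x)) : lap (u ∘ A) x = lap u (A x) := by
  rw [lap_eq_laplacian (hu.comp x A.contDiff.contDiffAt), lap_eq_laplacian hu,
    InnerProductSpace.laplacian_eq_iteratedFDeriv_orthonormalBasis u
      ((EuclideanSpace.basisFun (Fin N) ℝ).map A),
    InnerProductSpace.laplacian_eq_iteratedFDeriv_orthonormalBasis (u ∘ A)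
      (EuclideanSpace.basisFun (Fin N) ℝ)]
  refine Finset.sum_congr rfl fun i _ => ?_
  have hcomp := A.toContinuousLinearEquiv.iteratedFDerivWithin_comp_right u uniqueDiffOn_univ
    (mem_univ (A x)) 2
  rw [preimage_univ, iteratedFDerivWithin_univ, iteratedFDerivWithin_univ,
    LinearIsometryEquiv.coe_toContinuousLinearEquiv] at hcomp
  rw [hcomp, ContinuousMultilinearMap.compContinuousLinearMap_apply]
  congr 1
  ext j
  fin_cases j <;> simp

lemma hasFDerivAt_comp_normSq {E : Type*} [NormedAddCommGroup E] [InnerProductSpace ℝ E]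
    {g : ℝ → ℝ} {g' : ℝ} {y : E} (hg : HasDerivAt g g' (‖y‖ ^ 2)) :
    HasFDerivAt (fun y : E => g (‖y‖ ^ 2)) (g' • (2 • innerSL ℝ y)) y :=
  hg.comp_hasFDerivAt y (hasStrictFDerivAt_norm_sq y).hasFDerivAt

lemma lap_comp_normSq {g g' : ℝ → ℝ} {g'' : ℝ} (hg : ∀ᶠ t in 𝓝 (‖x‖ ^ 2), HasDerivAt g (g' t) t)
    (hg' : HasDerivAt g' g'' (‖x‖ ^ 2)) :
    lap (fun y => g (‖y‖ ^ 2)) x = 4 * ‖x‖ ^ 2 * g'' + 2 * N * g' (‖x‖ ^ 2) := by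
  have partial_sq (i : Fin N) : fderiv ℝ (fun y => fderiv ℝ
      (fun y : EuclideanSpace ℝ (Fin N) => g (‖y‖ ^ 2)) y (EuclideanSpace.single i 1)) x
        (EuclideanSpace.single i 1) = 4 * g'' * (x i) ^ 2 + 2 * g' (‖x‖ ^ 2) := by
    have hfirst : (fun y => fderiv ℝ (fun y : EuclideanSpace ℝ (Fin N) => g (‖y‖ ^ 2)) y
        (EuclideanSpace.single i 1)) =ᶠ[𝓝 x] fun y => g' (‖y‖ ^ 2) * (2 * y i) := by
      have hcont : ContinuousAt (fun y : EuclideanSpace ℝ (Fin N) => ‖y‖ ^ 2) x := by fun_prop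
      filter_upwards [hcont.eventually hg] with y hy
      rw [(hasFDerivAt_comp_normSq hy).fderiv]
      simp [EuclideanSpace.inner_single_right]
    have hcoord : HasFDerivAt (fun y : EuclideanSpace ℝ (Fin N) => 2 * y i)
        ((2 : ℝ) • (EuclideanSpace.proj i : EuclideanSpace ℝ (Fin N) →L[ℝ] ℝ)) x :=
      (EuclideanSpace.proj i : EuclideanSpace ℝ (Fin N) →L[ℝ] ℝ).hasFDerivAt.const_mul 2
    rw [hfirst.fderiv_eq, ((hasFDerivAt_comp_normSq hg').fun_mul hcoord).fderiv]
    simp [EuclideanSpace.inner_single_right]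
    ring
  rw [lap, Finset.sum_congr rfl fun i _ => partial_sq i, Finset.sum_add_distrib, ← Finset.mul_sum,
    ← EuclideanSpace.real_norm_sq_eq]
  simp
  ring

end Laplacian

section Radial

variable {N : ℕ} {v : EuclideanSpace ℝ (Fin N) → ℝ} {e : EuclideanSpace ℝ (Fin N)} {t : ℝ}

/-- `v` is radial on the open unit ball. -/
def IsRadialOnBall (v : EuclideanSpace ℝ (Fin N) → ℝ) : Prop :=
  ∀ x ∈ ball (0 : EuclideanSpace ℝ (Fin N)) 1, ∀ y, ‖x‖ = ‖y‖ → v x = v y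

lemma exists_linearIsometryEquiv_apply_eq {x y : EuclideanSpace ℝ (Fin N)} (h : ‖x‖ = ‖y‖) :
    ∃ A : EuclideanSpace ℝ (Fin N) ≃ₗᵢ[ℝ] EuclideanSpace ℝ (Fin N), A x = y :=
  ⟨_, Submodule.reflection_sub h⟩

lemma exists_euclideanSpace_norm_eq_one (hN : 1 ≤ N) : ∃ e : EuclideanSpace ℝ (Fin N), ‖e‖ = 1 :=
  ⟨EuclideanSpace.single ⟨0, hN⟩ 1, by simp⟩

protected lemma IsRadialOnBall.lap (hv : IsRadialOnBall v)
    (hv2 : ∀ x ∈ ball (0 : EuclideanSpace ℝ (Fin N)) 1, ContDiffAt ℝ 2 v x) :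
    IsRadialOnBall (lap v) := by
  intro x hx y hxy
  obtain ⟨A, rfl⟩ := exists_linearIsometryEquiv_apply_eq hxy
  rw [← lap_comp_isometry A (hv2 _ (by simpa using hx))]
  apply lap_congr
  filter_upwards [isOpen_ball.mem_nhds hx] with z hz
  exact hv z hz _ (by simp)

lemma norm_sqrt_smul (he : ‖e‖ = 1) (t : ℝ) : ‖√t • e‖ = √t := by
  rw [norm_smul, he, mul_one, Real.norm_of_nonneg (Real.sqrt_nonneg _)]

lemma IsRadialOnBall.apply_eq_sqrt_smul {x : EuclideanSpace ℝ (Fin N)} (hv : IsRadialOnBall v)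
    (he : ‖e‖ = 1) (hx : x ∈ ball 0 1) : v x = v (√(‖x‖ ^ 2) • e) :=
  hv x hx _ (by rw [norm_sqrt_smul he, Real.sqrt_sq (norm_nonneg x)])

lemma sqrt_smul_mem_ball (he : ‖e‖ = 1) (ht : t < 1) : √t • e ∈ ball 0 1 := by
  rwa [mem_ball_zero_iff, norm_sqrt_smul he, Real.sqrt_lt' one_pos, one_pow]

lemma sqrt_smul_mem_closedBall (he : ‖e‖ = 1) (ht : t ≤ 1) : √t • e ∈ closedBall 0 1 := by
  rwa [mem_closedBall_zero_iff, norm_sqrt_smul he, Real.sqrt_le_one]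

lemma hasDerivAt_comp_sqrt_smul (hv : DifferentiableAt ℝ v (√t • e)) (ht : 0 < t) :
    HasDerivAt (fun t => v (√t • e)) (fderiv ℝ v (√t • e) e / (2 * √t)) t := by
  have hcurve := (Real.hasDerivAt_sqrt ht.ne').smul_const e
  refine (hv.hasFDerivAt.comp_hasDerivAt t hcurve).congr_deriv ?_
  rw [map_smul, smul_eq_mul, one_div_mul_eq_div]

lemma differentiableAt_fderiv_sqrt_smul (hv : ContDiffAt ℝ 2 v (√t • e)) (ht : 0 < t) :
    DifferentiableAt ℝ (fun t => fderiv ℝ v (√t • e) e / (2 * √t)) t := by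
  have hsqrt := (Real.hasDerivAt_sqrt ht.ne').differentiableAt
  have hfd : DifferentiableAt ℝ (fun y => fderiv ℝ v y e) (√t • e) :=
    (contDiffAt_fderiv_apply (m := 1) hv (by norm_num) e).differentiableAt one_ne_zero
  have := Real.sqrt_pos.2 ht
  exact (hfd.comp t (hsqrt.smul_const e)).div (hsqrt.const_mul 2) (by positivity)

lemma tendsto_flux_sqrt_smul (hN : 2 ≤ N) (hv : ContDiffAt ℝ 1 v 0) :
    Tendsto (fun t => t ^ (N / 2 : ℝ) * (fderiv ℝ v (√t • e) e / (2 * √t))) (𝓝[>] 0) (𝓝 0) := by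
  have hN' : (2 : ℝ) ≤ N := mod_cast hN
  have hfd : ContinuousAt (fun t : ℝ => fderiv ℝ v (√t • e) e) 0 := by
    have h0 : ContinuousAt (fun y => fderiv ℝ v y e) (√0 • e) := by
      rw [Real.sqrt_zero, zero_smul]
      exact (contDiffAt_fderiv_apply (m := 0) hv (by norm_num) e).continuousAt
    exact ContinuousAt.comp (f := fun t : ℝ => √t • e) h0 (by fun_prop)
  have hpow : ContinuousAt (fun t : ℝ => t ^ ((N : ℝ) / 2 - 1 / 2) / 2) 0 :=
    (Real.continuousAt_rpow_const _ _ (.inr (by linarith))).div_const 2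
  have hlim := (hpow.fun_mul hfd).tendsto.mono_left (nhdsWithin_le_nhds (s := Ioi 0))
  simp only [Real.zero_rpow (show (N : ℝ) / 2 - 1 / 2 ≠ 0 by linarith), zero_div, zero_mul] at hlim
  refine hlim.congr' ?_
  filter_upwards [self_mem_nhdsWithin] with t ht
  have := Real.sqrt_pos.2 ht
  rw [Real.rpow_sub ht, ← Real.sqrt_eq_rpow]
  field_simp

lemma IsRadialOnBall.hasRadialLap (hN : 2 ≤ N) (hv : IsRadialOnBall v)
    (hv2 : ∀ x ∈ ball (0 : EuclideanSpace ℝ (Fin N)) 1, ContDiffAt ℝ 2 v x) (he : ‖e‖ = 1) :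
    HasRadialLap N 1 (fun t => v (√t • e)) (fun t => fderiv ℝ v (√t • e) e / (2 * √t))
      (fun t => lap v (√t • e)) := by
  have hderiv : ∀ t ∈ Ioo (0 : ℝ) 1,
      HasDerivAt (fun t => v (√t • e)) (fderiv ℝ v (√t • e) e / (2 * √t)) t := fun t ht =>
    hasDerivAt_comp_sqrt_smul ((hv2 _ (sqrt_smul_mem_ball he ht.2)).differentiableAt two_ne_zero)
      ht.1
  refine ⟨hderiv, fun t ht => ?_,
    tendsto_flux_sqrt_smul hN ((hv2 0 (mem_ball_self one_pos)).of_le one_le_two)⟩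
  have hball := sqrt_smul_mem_ball he ht.2
  have hderiv' := (differentiableAt_fderiv_sqrt_smul (hv2 _ hball) ht.1).hasDerivAt
  have hnorm : ‖√t • e‖ ^ 2 = t := by rw [norm_sqrt_smul he, Real.sq_sqrt ht.1.le]
  have hradial : v =ᶠ[𝓝 (√t • e)] fun y => v (√(‖y‖ ^ 2) • e) := by
    filter_upwards [isOpen_ball.mem_nhds hball] with z hz
    exact hv.apply_eq_sqrt_smul he hz
  refine ⟨_, hderiv', ?_⟩
  rw [lap_congr hradial, lap_comp_normSq (g := fun t => v (√t • e))
    (hnorm.symm ▸ eventually_of_mem (Ioo_mem_nhds ht.1 ht.2) hderiv) (hnorm.symm ▸ hderiv'), hnorm]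

end Radial

section ClassicalSolution

variable {N : ℕ} {lam l l' : ℝ} {u v : EuclideanSpace ℝ (Fin N) → ℝ}
  {e x : EuclideanSpace ℝ (Fin N)}

lemma uniqueDiffOn_closedBall {E : Type*} [NormedAddCommGroup E] [NormedSpace ℝ E] (x : E) {r : ℝ}
    (hr : 0 < r) : UniqueDiffOn ℝ (closedBall x r) :=
  uniqueDiffOn_convex (convex_closedBall x r)
    ⟨x, mem_interior_iff_mem_nhds.2 (closedBall_mem_nhds x hr)⟩

namespace IsClassicalSolution

lemma contDiffAt (hu : IsClassicalSolution N lam u) (hx : x ∈ ball 0 1) : ContDiffAt ℝ 4 u x :=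
  hu.contDiffOn.contDiffAt (mem_of_superset (isOpen_ball.mem_nhds hx) ball_subset_closedBall)

lemma comp_isometry (hu : IsClassicalSolution N lam u)
    (A : EuclideanSpace ℝ (Fin N) ≃ₗᵢ[ℝ] EuclideanSpace ℝ (Fin N)) :
    IsClassicalSolution N lam (u ∘ A) := by
  have hball : ∀ x ∈ ball (0 : EuclideanSpace ℝ (Fin N)) 1, A x ∈ ball 0 1 := fun x hx => by
    simpa using hx
  refine ⟨hu.contDiffOn.comp A.contDiff.contDiffOn fun x hx => by simpa using hx,
    fun x hx => hu.pos _ (hball x hx), fun x hx => hu.lt_one _ (hball x hx), fun x hx => ?_,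
    fun x hx => hu.bdry _ (by simpa using hx), fun x hx => ?_⟩
  · have hlap : lap (u ∘ A) =ᶠ[𝓝 x] lap u ∘ A := by
      filter_upwards [isOpen_ball.mem_nhds hx] with z hz
      exact lap_comp_isometry A ((hu.contDiffAt (hball z hz)).of_le (by norm_num))
    rw [biharm, lap_congr hlap,
      lap_comp_isometry A (contDiffAt_lap (hu.contDiffAt (hball x hx)) (by norm_num))]
    exact hu.eqn _ (hball x hx)
  · have hpre : A.toContinuousLinearEquiv ⁻¹' closedBall (0 : EuclideanSpace ℝ (Fin N)) 1 =
        closedBall 0 1 := by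
      ext
      simp
    have hfd := A.toContinuousLinearEquiv.comp_right_fderivWithin (f := u) (s := closedBall 0 1)
      (x := x) (by rw [hpre]; exact uniqueDiffOn_closedBall 0 one_pos x (by simp [hx]))
    rw [hpre] at hfd
    exact (congrArg (· x) hfd).trans (hu.bdry_deriv (A x) (by simpa using hx))

lemma isRadialOnBall_of_forall_le (hu : IsClassicalSolution N lam u)
    (hmin : ∀ v, IsClassicalSolution N lam v → ∀ x ∈ ball 0 1, u x ≤ v x) :
    IsRadialOnBall u := by
  have hle : ∀ x ∈ ball (0 : EuclideanSpace ℝ (Fin N)) 1, ∀ y, ‖x‖ = ‖y‖ → u x ≤ u y := by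
    intro x hx y hxy
    obtain ⟨A, rfl⟩ := exists_linearIsometryEquiv_apply_eq hxy
    exact hmin _ (hu.comp_isometry A) x hx
  exact fun x hx y hxy => (hle x hx y hxy).antisymm (hle y (by simpa [← hxy] using hx) x hxy.symm)

lemma hasRadialBilap (hN : 2 ≤ N) (hu : IsClassicalSolution N lam u) (hr : IsRadialOnBall u)
    (he : ‖e‖ = 1) :
    HasRadialBilap N 1 (fun t => u (√t • e)) (fun t => fderiv ℝ u (√t • e) e / (2 * √t))
      (fun t => lam / (1 - u (√t • e)) ^ 2) := by
  have hu2 : ∀ x ∈ ball (0 : EuclideanSpace ℝ (Fin N)) 1, ContDiffAt ℝ 2 u x := fun x hx =>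
    (hu.contDiffAt hx).of_le (by norm_num)
  refine ⟨_, _, hr.hasRadialLap hN hu2 he, ((hr.lap hu2).hasRadialLap hN (fun x hx =>
    contDiffAt_lap (hu.contDiffAt hx) (by norm_num)) he).congr fun t ht => ?_⟩
  exact (hu.eqn _ (sqrt_smul_mem_ball he ht.2)).symm

lemma tendsto_deriv_sqrt_smul (hu : IsClassicalSolution N lam u) (he : ‖e‖ = 1) :
    Tendsto (fun t => fderiv ℝ u (√t • e) e / (2 * √t)) (𝓝[<] 1) (𝓝 0) := by
  have hfd := hu.contDiffOn.continuousOn_fderivWithin (uniqueDiffOn_closedBall 0 one_pos)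
    (by norm_num)
  have hcurve : ContinuousOn (fun t : ℝ => √t • e) (Ioc 0 1) := by fun_prop
  have hcont : ContinuousOn
      (fun t : ℝ => fderivWithin ℝ u (closedBall 0 1) (√t • e) e / (2 * √t)) (Ioc 0 1) :=
    ((hfd.comp hcurve fun t ht => sqrt_smul_mem_closedBall he ht.2).clm_apply
      continuousOn_const).div (by fun_prop) fun t ht => by
        have := Real.sqrt_pos.2 ht.1
        positivity
  have hlim := (hcont 1 ⟨one_pos, le_rfl⟩).tendsto.mono_left
    (nhdsWithin_mono 1 Ioo_subset_Ioc_self)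
  rw [nhdsWithin_Ioo_eq_nhdsLT one_pos, Real.sqrt_one, one_smul, hu.bdry_deriv e he,
    zero_div] at hlim
  refine hlim.congr' ?_
  filter_upwards [self_mem_nhdsWithin] with t ht
  rw [fderivWithin_of_mem_nhds (mem_of_superset
    (isOpen_ball.mem_nhds (sqrt_smul_mem_ball he ht)) ball_subset_closedBall)]

lemma isRadialSolution (hN : 2 ≤ N) (hu : IsClassicalSolution N lam u) (hr : IsRadialOnBall u)
    (he : ‖e‖ = 1) :
    IsRadialSolution N lam (fun t => u (√t • e))
      (fun t => fderiv ℝ u (√t • e) e / (2 * √t)) where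
  bilap := hu.hasRadialBilap hN hr he
  continuousOn := hu.contDiffOn.continuousOn.comp
    (Real.continuous_sqrt.smul continuous_const).continuousOn
    fun t ht => sqrt_smul_mem_closedBall he ht.2
  lt_one t ht := hu.lt_one _ (sqrt_smul_mem_ball he ht.2)
  map_one := hu.bdry _ (by simp [he])
  tendsto_deriv := hu.tendsto_deriv_sqrt_smul he

lemma le_center (hN : 2 ≤ N) (hl : 0 ≤ lam) (hu : IsClassicalSolution N lam u)
    (hr : IsRadialOnBall u) (hx : x ∈ ball 0 1) : u x ≤ u 0 := by
  obtain ⟨e, he⟩ := exists_euclideanSpace_norm_eq_one (one_le_two.trans hN)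
  have hx1 : ‖x‖ ^ 2 ≤ 1 := pow_le_one₀ (norm_nonneg x) (mem_ball_zero_iff.1 hx).le
  have := (hu.isRadialSolution hN hr he).antitoneOn hl (left_mem_Icc.2 zero_le_one)
    ⟨sq_nonneg _, hx1⟩ (sq_nonneg ‖x‖)
  simpa [hr.apply_eq_sqrt_smul he hx] using this

lemma center_sub_le {C : ℝ} (hN : 3 ≤ N) (hu : IsClassicalSolution N l u) (hur : IsRadialOnBall u)
    (hv : IsClassicalSolution N l' v) (hvr : IsRadialOnBall v) (hl : 0 ≤ l) (hll : l < l')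
    (huv : ∀ x ∈ ball 0 1, u x ≤ v x) (hC : 0 < C) (hCl : l ≤ C ^ 3 * lamBar N)
    (hx : x ∈ ball 0 1) : u 0 - u x ≤ C * ‖x‖ ^ (4 / 3 : ℝ) := by
  have hN2 : 2 ≤ N := by omega
  have hN3 : (3 : ℝ) ≤ N := mod_cast hN
  obtain ⟨e, he⟩ := exists_euclideanSpace_norm_eq_one (one_le_two.trans hN2)
  have hx1 : ‖x‖ ^ 2 < 1 := pow_lt_one₀ (norm_nonneg x) (mem_ball_zero_iff.1 hx) two_ne_zero
  have := (hu.isRadialSolution hN2 hur he).center_sub_le (hv.isRadialSolution hN2 hvr he)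
    (by linarith) hl hll (fun t ht => huv _ (sqrt_smul_mem_ball he ht.2)) hC hCl
    ⟨sq_nonneg ‖x‖, hx1⟩
  rw [← hur.apply_eq_sqrt_smul he hx, ← Real.rpow_natCast, ← Real.rpow_mul (norm_nonneg x),
    Real.sqrt_zero, zero_smul] at this
  norm_num at this ⊢
  exact this

end IsClassicalSolution

end ClassicalSolution

section Boundedness

variable {N : ℕ} {lam : ℝ} {f g u φ : EuclideanSpace ℝ (Fin N) → ℝ}

lemma integrable_mul_of_continuousAt_tsupport {X : Type*} [TopologicalSpace X] [MeasurableSpace X]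
    [OpensMeasurableSpace X] {μ : Measure X} [IsFiniteMeasureOnCompacts μ] {f g : X → ℝ}
    (hf : Continuous f) (hfc : HasCompactSupport f) (hg : ∀ x ∈ tsupport f, ContinuousAt g x) :
    Integrable (fun x => f x * g x) μ :=
  (continuous_of_tsupport fun x hx => hf.continuousAt.fun_mul
    (hg x (tsupport_mul_subset_left hx))).integrable_of_hasCompactSupport hfc.mul_right

lemma tsupport_lap_subset (f : EuclideanSpace ℝ (Fin N) → ℝ) : tsupport (lap f) ⊆ tsupport f := by
  intro x
  contrapose
  rw [notMem_tsupport_iff_eventuallyEq, notMem_tsupport_iff_eventuallyEq]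
  intro hf
  filter_upwards [hf.eventuallyEq_nhds] with y hy
  rw [lap_congr hy]
  simp [lap, Pi.zero_def]

lemma contDiff_lap {m n : WithTop ℕ∞} (hf : ContDiff ℝ n f) (hmn : m + 2 ≤ n) :
    ContDiff ℝ m (lap f) :=
  contDiff_iff_contDiffAt.2 fun _ => contDiffAt_lap hf.contDiffAt hmn

lemma integral_mul_fderiv_eq_neg (hf : ContDiff ℝ 1 f) (hfc : HasCompactSupport f)
    (hg : ∀ x ∈ tsupport f, ContDiffAt ℝ 1 g x) (v : EuclideanSpace ℝ (Fin N)) :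
    ∫ x, f x * fderiv ℝ g x v = -∫ x, fderiv ℝ f x v * g x := by
  have hf' : Continuous fun x => fderiv ℝ f x v :=
    (hf.continuous_fderiv one_ne_zero).clm_apply continuous_const
  exact integral_mul_fderiv_eq_neg_fderiv_mul_of_integrable
    (integrable_mul_of_continuousAt_tsupport hf' (hfc.fderiv_apply ℝ v)
      fun x hx => (hg x (tsupport_fderiv_apply_subset ℝ v hx)).continuousAt)
    (integrable_mul_of_continuousAt_tsupport hf.continuous hfc
      fun x hx => (contDiffAt_fderiv_apply (m := 0) (hg x hx) (by norm_num) v).continuousAt)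
    (integrable_mul_of_continuousAt_tsupport hf.continuous hfc fun x hx => (hg x hx).continuousAt)
    (fun x _ => hf.differentiable one_ne_zero x)
    (fun x hx => (hg x hx).differentiableAt one_ne_zero)

lemma integral_mul_lap (hf : ContDiff ℝ 2 f) (hfc : HasCompactSupport f)
    (hg : ∀ x ∈ tsupport f, ContDiffAt ℝ 2 g x) :
    ∫ x, f x * lap g x = ∫ x, lap f x * g x := by
  have hf1 (v : EuclideanSpace ℝ (Fin N)) : ContDiff ℝ 1 fun x => fderiv ℝ f x v :=
    contDiff_iff_contDiffAt.2 fun _ => contDiffAt_fderiv_apply hf.contDiffAt (by norm_num) v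
  have hf2 (v : EuclideanSpace ℝ (Fin N)) :
      Continuous fun x => fderiv ℝ (fun y => fderiv ℝ f y v) x v :=
    ((hf1 v).continuous_fderiv one_ne_zero).clm_apply continuous_const
  have hg1 (v x) (hx : x ∈ tsupport f) : ContDiffAt ℝ 1 (fun x => fderiv ℝ g x v) x :=
    contDiffAt_fderiv_apply (hg x hx) (by norm_num) v
  have hsupp (v : EuclideanSpace ℝ (Fin N)) := tsupport_fderiv_apply_subset ℝ (f := f) v
  simp only [lap, Finset.mul_sum, Finset.sum_mul]
  rw [integral_finsetSum, integral_finsetSum]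
  · refine Finset.sum_congr rfl fun i _ => ?_
    rw [integral_mul_fderiv_eq_neg (hf.of_le one_le_two) hfc (hg1 _),
      integral_mul_fderiv_eq_neg (hf1 _) (hfc.fderiv_apply ℝ _)
        fun x hx => (hg x (hsupp _ hx)).of_le one_le_two, neg_neg]
  · exact fun i _ => integrable_mul_of_continuousAt_tsupport (hf2 _)
      ((hfc.fderiv_apply ℝ _).fderiv_apply ℝ _) fun x hx =>
        (hg x (hsupp _ (tsupport_fderiv_apply_subset ℝ _ hx))).continuousAt
  · exact fun i _ => integrable_mul_of_continuousAt_tsupport hf.continuous hfc fun x hx =>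
      (contDiffAt_fderiv_apply (m := 0) (hg1 _ x hx) (by norm_num) _).continuousAt

lemma integral_mul_biharm (hf : ContDiff ℝ 4 f) (hfc : HasCompactSupport f)
    (hg : ∀ x ∈ tsupport f, ContDiffAt ℝ 4 g x) :
    ∫ x, f x * biharm g x = ∫ x, biharm f x * g x := by
  unfold biharm
  rw [integral_mul_lap (hf.of_le (by norm_num)) hfc
      fun x hx => contDiffAt_lap (hg x hx) (by norm_num),
    integral_mul_lap (contDiff_lap hf (by norm_num)) (hfc.mono' (subset_closure.trans
      (tsupport_lap_subset f))) fun x hx => (hg x (tsupport_lap_subset f hx)).of_le (by norm_num)]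

lemma IsClassicalSolution.mul_integral_le (hu : IsClassicalSolution N lam u) (hlam : 0 ≤ lam)
    (hφ : ContDiff ℝ 4 φ) (hφc : HasCompactSupport φ) (hφ0 : ∀ x, 0 ≤ φ x)
    (hsupp : tsupport φ ⊆ ball 0 1) : lam * ∫ x, φ x ≤ ∫ x, |biharm φ x| := by
  have hu4 : ∀ x ∈ tsupport φ, ContDiffAt ℝ 4 u x := fun x hx => hu.contDiffAt (hsupp hx)
  have hφ' : Continuous (biharm φ) := (contDiff_lap (m := 0) (contDiff_lap (m := 2) hφ
    (by norm_num)) (by norm_num)).continuous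
  have hsupp' : tsupport (biharm φ) ⊆ tsupport φ :=
    (tsupport_lap_subset _).trans (tsupport_lap_subset φ)
  have hφc' : HasCompactSupport (biharm φ) :=
    hφc.mono' (subset_closure.trans hsupp')
  calc lam * ∫ x, φ x = ∫ x, lam * φ x := (integral_const_mul _ _).symm
    _ ≤ ∫ x, φ x * biharm u x := by
      refine integral_mono ((hφ.continuous.integrable_of_hasCompactSupport hφc).const_mul lam)
        (integrable_mul_of_continuousAt_tsupport hφ.continuous hφc fun x hx =>
          (contDiffAt_lap (m := 0) (contDiffAt_lap (m := 2) (hu4 x hx) (by norm_num))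
            (by norm_num)).continuousAt) fun x => ?_
      by_cases hx : x ∈ ball 0 1
      · have hu0 := hu.pos x hx
        have hu1 : 0 < 1 - u x := sub_pos.2 (hu.lt_one x hx)
        beta_reduce
        rw [hu.eqn x hx, mul_comm lam]
        exact mul_le_mul_of_nonneg_left
          (le_div_self hlam (by positivity) (pow_le_one₀ hu1.le (by linarith))) (hφ0 x)
      · simp [image_eq_zero_of_notMem_tsupport fun h => hx (hsupp h)]
    _ = ∫ x, biharm φ x * u x := integral_mul_biharm hφ hφc hu4
    _ ≤ ∫ x, |biharm φ x| := by
      refine integral_mono (integrable_mul_of_continuousAt_tsupport hφ' hφc'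
        fun x hx => (hu4 x (hsupp' hx)).continuousAt)
        (hφ'.integrable_of_hasCompactSupport hφc').abs fun x => ?_
      by_cases hx : x ∈ ball 0 1
      · exact (mul_le_mul_of_nonneg_right (le_abs_self _) (hu.pos x hx).le).trans
          (mul_le_of_le_one_right (abs_nonneg _) (hu.lt_one x hx).le)
      · simp [image_eq_zero_of_notMem_tsupport fun h => hx (hsupp (hsupp' h))]

lemma bddAbove_solSet (N : ℕ) : BddAbove (solSet N) := by
  let φ : ContDiffBump (0 : EuclideanSpace ℝ (Fin N)) := ⟨1 / 4, 1 / 2, by norm_num, by norm_num⟩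
  refine ⟨(∫ x, |biharm φ x|) / ∫ x, φ x, ?_⟩
  rintro lam ⟨hlam, u, hu⟩
  rw [le_div_iff₀ φ.integral_pos]
  refine hu.mul_integral_le hlam.le φ.contDiff φ.hasCompactSupport φ.nonneg' ?_
  rw [φ.tsupport_eq]
  exact closedBall_subset_ball (by norm_num [φ])

end Boundedness

section RadialGreen

variable {n m : ℕ} {h k : ℝ → ℝ} {M R t : ℝ}

/-- `∫₀¹ ρⁿ h(ρ² t) dρ`: up to the factor `n + 1`, the mean over the ball `|x|² < t` of dimension
`n + 1` of the function `h (|x|²)`. -/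
noncomputable def radialMean (n : ℕ) (h : ℝ → ℝ) (t : ℝ) : ℝ :=
  ∫ ρ in 0..1, ρ ^ n * h (ρ ^ 2 * t)

lemma continuous_radialMean (n : ℕ) (hh : Continuous h) : Continuous (radialMean n h) :=
  intervalIntegral.continuous_parametric_intervalIntegral_of_continuous'
    (f := fun t ρ => ρ ^ n * h (ρ ^ 2 * t)) (by fun_prop) 0 1

lemma radialMean_sub (n : ℕ) (hh : Continuous h) (hk : Continuous k) (t : ℝ) :
    radialMean n (fun s => h s - k s) t = radialMean n h t - radialMean n k t := by
  simp only [radialMean, mul_sub]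
  exact intervalIntegral.integral_sub (Continuous.intervalIntegrable (by fun_prop) _ _)
    (Continuous.intervalIntegrable (by fun_prop) _ _)

lemma sq_mul_mem_Icc {ρ : ℝ} (hρ : ρ ∈ Icc 0 1) (ht : t ∈ Icc (-R) R) :
    ρ ^ 2 * t ∈ Icc (-R) R := by
  rw [mem_Icc, ← abs_le] at ht ⊢
  rw [abs_mul, abs_of_nonneg (sq_nonneg ρ)]
  exact (mul_le_of_le_one_left (abs_nonneg t) (pow_le_one₀ hρ.1 hρ.2)).trans ht

lemma abs_radialMean_le (n : ℕ) (hM : ∀ s ∈ Icc (-R) R, |h s| ≤ M) (ht : t ∈ Icc (-R) R) :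
    |radialMean n h t| ≤ M := by
  have hle : ∀ ρ ∈ Ι (0 : ℝ) 1, ‖ρ ^ n * h (ρ ^ 2 * t)‖ ≤ M := fun ρ hρ => by
    rw [uIoc_of_le zero_le_one] at hρ
    rw [norm_mul, Real.norm_of_nonneg (pow_nonneg hρ.1.le n), Real.norm_eq_abs]
    exact (mul_le_of_le_one_left (abs_nonneg _) (pow_le_one₀ hρ.1.le hρ.2)).trans
      (hM _ (sq_mul_mem_Icc (Ioc_subset_Icc_self hρ) ht))
  simpa [radialMean] using intervalIntegral.norm_integral_le_of_norm_le_const hle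

lemma hasDerivAt_radialMean (n : ℕ) (hh : ContDiff ℝ 1 h) (t : ℝ) :
    HasDerivAt (radialMean n h) (radialMean (n + 2) (deriv h) t) t := by
  have hh' := hh.continuous_deriv le_rfl
  have hcont := hh.continuous
  have hdiff := hh.differentiable one_ne_zero
  obtain ⟨C, hC⟩ := (isCompact_Icc (a := -(|t| + 1)) (b := |t| + 1)).exists_bound_of_continuousOn
    hh'.continuousOn
  refine (intervalIntegral.hasDerivAt_integral_of_dominated_loc_of_deriv_le
    (F := fun t ρ => ρ ^ n * h (ρ ^ 2 * t)) (F' := fun t ρ => ρ ^ (n + 2) * deriv h (ρ ^ 2 * t))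
    (bound := fun _ => C) (Icc_mem_nhds (a := -(|t| + 1)) (b := |t| + 1) ?_ ?_)
    (.of_forall fun s => Continuous.aestronglyMeasurable (by fun_prop))
    (Continuous.intervalIntegrable (by fun_prop) _ _)
    (Continuous.aestronglyMeasurable (by fun_prop)) (.of_forall fun ρ hρ s hs => ?_)
    intervalIntegrable_const (.of_forall fun ρ _ s _ => ?_)).2
  · linarith [neg_abs_le t]
  · linarith [le_abs_self t]
  · rw [uIoc_of_le zero_le_one] at hρ
    rw [norm_mul, Real.norm_of_nonneg (pow_nonneg hρ.1.le _)]
    exact (mul_le_of_le_one_left (norm_nonneg _) (pow_le_one₀ hρ.1.le hρ.2)).trans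
      (hC _ (sq_mul_mem_Icc (Ioc_subset_Icc_self hρ) hs))
  · refine (((hdiff _).hasDerivAt.comp s ((hasDerivAt_id s).const_mul (ρ ^ 2))).const_mul
      (ρ ^ n)).congr_deriv ?_
    simp only [id_eq, mul_one, pow_add]
    ring

lemma contDiff_radialMean (hh : ContDiff ℝ m h) : ContDiff ℝ m (radialMean n h) := by
  induction m generalizing n h with
  | zero => exact contDiff_zero.2 (continuous_radialMean n (contDiff_zero.1 hh))
  | succ m ih =>
    push_cast at hh ⊢
    have hderiv := hasDerivAt_radialMean n (hh.of_le le_add_self)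
    refine contDiff_succ_iff_deriv.2 ⟨fun t => (hderiv t).differentiableAt, by simp, ?_⟩
    rw [funext fun t => (hderiv t).deriv]
    exact ih (contDiff_succ_iff_deriv.1 hh).2.2

lemma radialMean_add_radialMean_deriv (n : ℕ) (hh : ContDiff ℝ 1 h) (t : ℝ) :
    (n + 1) * radialMean n h t + 2 * t * radialMean (n + 2) (deriv h) t = h t := by
  have hcont := hh.continuous
  have hderivc := hh.continuous_deriv le_rfl
  have hderiv (ρ : ℝ) : HasDerivAt (fun ρ => ρ ^ (n + 1) * h (ρ ^ 2 * t))
      ((n + 1) * (ρ ^ n * h (ρ ^ 2 * t)) + 2 * t * (ρ ^ (n + 2) * deriv h (ρ ^ 2 * t))) ρ := by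
    refine ((hasDerivAt_pow (n + 1) ρ).fun_mul ((hh.differentiable one_ne_zero _).hasDerivAt.comp ρ
      ((hasDerivAt_pow 2 ρ).mul_const t))).congr_deriv ?_
    simp only [Nat.add_sub_cancel, Function.comp_apply, Nat.cast_add, Nat.cast_one]
    ring
  have hftc := intervalIntegral.integral_eq_sub_of_hasDerivAt (a := 0) (b := 1)
    (fun ρ _ => hderiv ρ) (Continuous.intervalIntegrable (by fun_prop) _ _)
  rw [intervalIntegral.integral_add (Continuous.intervalIntegrable (by fun_prop) _ _)
    (Continuous.intervalIntegrable (by fun_prop) _ _), intervalIntegral.integral_const_mul,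
    intervalIntegral.integral_const_mul] at hftc
  simpa [radialMean] using hftc

/-- The inverse of the radial Laplacian `h ↦ 4 t h'' + 2 (n + 1) h'` of dimension `n + 1` under the
Dirichlet condition at `t = 1`. -/
noncomputable def radialInvLap (n : ℕ) (h : ℝ → ℝ) (t : ℝ) : ℝ :=
  ∫ s in 1..t, radialMean n h s / 2

lemma hasDerivAt_radialInvLap (n : ℕ) (hh : Continuous h) (t : ℝ) :
    HasDerivAt (radialInvLap n h) (radialMean n h t / 2) t :=
  ((continuous_radialMean n hh).div_const 2).integral_hasStrictDerivAt 1 t |>.hasDerivAt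

lemma contDiff_radialInvLap (hh : ContDiff ℝ m h) : ContDiff ℝ (m + 1) (radialInvLap n h) := by
  have hderiv := hasDerivAt_radialInvLap n hh.continuous
  refine contDiff_succ_iff_deriv.2 ⟨fun t => (hderiv t).differentiableAt, by simp, ?_⟩
  rw [funext fun t => (hderiv t).deriv]
  exact (contDiff_radialMean hh).div_const 2

lemma radialInvLap_sub (n : ℕ) (hh : Continuous h) (hk : Continuous k) (t : ℝ) :
    radialInvLap n (fun s => h s - k s) t = radialInvLap n h t - radialInvLap n k t := by
  have hh' := continuous_radialMean n hh
  have hk' := continuous_radialMean n hk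
  simp only [radialInvLap, radialMean_sub n hh hk, sub_div]
  exact intervalIntegral.integral_sub (Continuous.intervalIntegrable (by fun_prop) _ _)
    (Continuous.intervalIntegrable (by fun_prop) _ _)

lemma abs_radialInvLap_le (n : ℕ) (hR : 1 ≤ R) (hM : ∀ s ∈ Icc (-R) R, |h s| ≤ M)
    (ht : t ∈ Icc (-R) R) : |radialInvLap n h t| ≤ M * R := by
  have h1 : (1 : ℝ) ∈ Icc (-R) R := ⟨by linarith, hR⟩
  have hM0 : 0 ≤ M := (abs_nonneg _).trans (hM 1 h1)
  have hle : ∀ s ∈ Ι 1 t, ‖radialMean n h s / 2‖ ≤ M / 2 := fun s hs => by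
    rw [norm_div, Real.norm_ofNat, Real.norm_eq_abs]
    gcongr
    exact abs_radialMean_le n hM (uIcc_subset_Icc h1 ht (uIoc_subset_uIcc hs))
  have hdist : |t - 1| ≤ 2 * R := abs_le.2 ⟨by linarith [ht.1], by linarith [ht.2]⟩
  calc |radialInvLap n h t| ≤ M / 2 * |t - 1| :=
        intervalIntegral.norm_integral_le_of_norm_le_const hle
    _ ≤ M / 2 * (2 * R) := by gcongr
    _ = M * R := by ring

lemma hasRadialLap_radialInvLap (n : ℕ) (hh : ContDiff ℝ 1 h) (R : ℝ) :
    HasRadialLap (n + 1) R (radialInvLap n h) (fun t => radialMean n h t / 2) h := by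
  refine .of_tendsto (by positivity) (fun t _ => hasDerivAt_radialInvLap n hh.continuous t)
    (fun t _ => ⟨_, (hasDerivAt_radialMean n hh t).div_const 2, ?_⟩)
    (((continuous_radialMean n hh.continuous).div_const 2).tendsto 0 |>.mono_left
      nhdsWithin_le_nhds)
  rw [← radialMean_add_radialMean_deriv n hh t]
  ring

/-- The inverse of the radial bilaplacian of dimension `n + 1` under the Dirichlet conditions
`g 1 = g' 1 = 0`. -/
noncomputable def radialGreen (n : ℕ) (f : ℝ → ℝ) (t : ℝ) : ℝ :=
  radialInvLap n (radialInvLap n f) t - radialMean n (radialInvLap n f) 1 / 2 * (t - 1)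

variable {f g : ℝ → ℝ}

lemma radialGreen_one (n : ℕ) (f : ℝ → ℝ) : radialGreen n f 1 = 0 := by
  simp [radialGreen, radialInvLap]

lemma hasDerivAt_radialGreen (n : ℕ) (hf : Continuous f) (t : ℝ) :
    HasDerivAt (radialGreen n f)
      (radialMean n (radialInvLap n f) t / 2 - radialMean n (radialInvLap n f) 1 / 2) t := by
  have hcont := (contDiff_radialInvLap (n := n) (contDiff_zero.2 hf)).continuous
  exact ((hasDerivAt_radialInvLap n hcont t).fun_sub
    (((hasDerivAt_id t).sub_const 1).const_mul _)).congr_deriv (by rw [mul_one])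

lemma deriv_radialGreen_one (n : ℕ) (hf : Continuous f) : deriv (radialGreen n f) 1 = 0 := by
  rw [(hasDerivAt_radialGreen n hf 1).deriv, sub_self]

lemma contDiff_radialGreen (hf : ContDiff ℝ m f) :
    ContDiff ℝ (m + 1 + 1) (radialGreen n f) := by
  have hII := contDiff_radialInvLap (n := n) (m := m + 1)
    (by exact_mod_cast contDiff_radialInvLap (n := n) hf)
  push_cast at hII
  exact hII.sub (contDiff_const.mul (contDiff_id.sub contDiff_const))

lemma radialGreen_sub (n : ℕ) (hf : Continuous f) (hg : Continuous g) (t : ℝ) :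
    radialGreen n (fun s => f s - g s) t = radialGreen n f t - radialGreen n g t := by
  have hf' := (contDiff_radialInvLap (n := n) (contDiff_zero.2 hf)).continuous
  have hg' := (contDiff_radialInvLap (n := n) (contDiff_zero.2 hg)).continuous
  simp only [radialGreen, funext (radialInvLap_sub n hf hg), radialInvLap_sub n hf' hg',
    radialMean_sub n hf' hg']
  ring

lemma abs_radialGreen_le (n : ℕ) (hR : 1 ≤ R) (hM : ∀ s ∈ Icc (-R) R, |f s| ≤ M)
    (ht : t ∈ Icc (-R) R) : |radialGreen n f t| ≤ 2 * R ^ 2 * M := by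
  have h1 : (1 : ℝ) ∈ Icc (-R) R := ⟨by linarith, hR⟩
  have hI : ∀ s ∈ Icc (-R) R, |radialInvLap n f s| ≤ M * R := fun s hs =>
    abs_radialInvLap_le n hR hM hs
  have hMR : 0 ≤ M * R := (abs_nonneg _).trans (hI 1 h1)
  have hdist : |t - 1| ≤ 2 * R := abs_le.2 ⟨by linarith [ht.1], by linarith [ht.2]⟩
  calc |radialGreen n f t|
      ≤ |radialInvLap n (radialInvLap n f) t|
        + |radialMean n (radialInvLap n f) 1 / 2 * (t - 1)| := abs_sub _ _
    _ ≤ M * R * R + M * R / 2 * (2 * R) := by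
      rw [abs_mul, abs_div, abs_two]
      gcongr
      exacts [abs_radialInvLap_le n hR hI ht, abs_radialMean_le n hI h1]
    _ = 2 * R ^ 2 * M := by ring

lemma hasRadialBilap_radialGreen (n : ℕ) (hf : ContDiff ℝ 1 f) (R : ℝ) :
    HasRadialBilap (n + 1) R (radialGreen n f)
      (fun t => radialMean n (radialInvLap n f) t / 2 - radialMean n (radialInvLap n f) 1 / 2)
      f := by
  have hI : ContDiff ℝ 1 (radialInvLap n f) :=
    (contDiff_radialInvLap (m := 1) hf).of_le le_self_add
  have hlin : HasRadialLap (n + 1) R (fun t => t - 1) (fun _ => 1) (fun _ => 2 * (n + 1)) :=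
    .of_tendsto (by positivity) (fun t _ => (hasDerivAt_id t).sub_const 1)
      (fun t _ => ⟨0, hasDerivAt_const t 1, by ring⟩) tendsto_const_nhds
  set c := radialMean n (radialInvLap n f) 1 / 2
  exact ⟨_, _,
    by simpa using! (hasRadialLap_radialInvLap n hI R).sub (hlin.const_mul c),
    by simpa using (hasRadialLap_radialInvLap n hf R).sub (.const _ R (c * (2 * (n + 1))))⟩

lemma abs_mul_radialGreen_le {b : ℝ → ℝ} (hR : 1 ≤ R) (hb : ∀ t, |b t| ≤ 1)
    (hbR : ∀ t, t ∉ Icc (-R) R → b t = 0) (n : ℕ) (hM : ∀ t, |f t| ≤ M) (t : ℝ) :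
    |b t * radialGreen n f t| ≤ 2 * R ^ 2 * M := by
  by_cases ht : t ∈ Icc (-R) R
  · rw [abs_mul]
    exact (mul_le_of_le_one_left (abs_nonneg _) (hb t)).trans
      (abs_radialGreen_le n hR (fun s _ => hM s) ht)
  · have := (abs_nonneg _).trans (hM t)
    rw [hbR t ht, zero_mul, abs_zero]
    positivity

lemma exists_eq_mul_radialGreen {b φ : ℝ → ℝ} {K : ℝ≥0} (hR : 1 ≤ R) (hb : ∀ t, |b t| ≤ 1)
    (hbc : Continuous b) (hbR : ∀ t, t ∉ Icc (-R) R → b t = 0) (n : ℕ) (hφ : LipschitzWith K φ)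
    (hK : 2 * R ^ 2 * K < 1) :
    ∃ w : ℝ →ᵇ ℝ, ∀ t, w t = b t * radialGreen n (fun s => φ (w s)) t := by
  have hcont (w : ℝ →ᵇ ℝ) : Continuous fun s => φ (w s) := hφ.continuous.comp w.continuous
  let Φ (w : ℝ →ᵇ ℝ) : ℝ →ᵇ ℝ := .ofNormedAddCommGroup
    (fun t => b t * radialGreen n (fun s => φ (w s)) t)
    (hbc.mul (contDiff_radialGreen (contDiff_zero.2 (hcont w))).continuous)
    (2 * R ^ 2 * ‖w.comp φ hφ‖) (abs_mul_radialGreen_le hR hb hbR n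
      (w.comp φ hφ).norm_coe_le_norm)
  have hΦ : ContractingWith (2 * R ^ 2 * K).toNNReal Φ := by
    refine ⟨by simpa, .of_dist_le_mul fun v w => ?_⟩
    rw [Real.coe_toNNReal _ (by positivity)]
    refine (BoundedContinuousFunction.dist_le (by positivity)).2 fun t => ?_
    have := abs_mul_radialGreen_le hR hb hbR n (f := fun s => φ (v s) - φ (w s))
      (M := K * dist v w) (fun s => (hφ.dist_le_mul _ _).trans
        (mul_le_mul_of_nonneg_left (BoundedContinuousFunction.dist_coe_le_dist s) K.2)) t
    rw [radialGreen_sub n (hcont v) (hcont w), mul_sub, ← mul_assoc] at this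
    exact this
  exact ⟨hΦ.fixedPoint, fun t => (congrFun (congrArg _ hΦ.fixedPoint_isFixedPt) t).symm⟩

end RadialGreen

section Existence

variable {N : ℕ} {x : EuclideanSpace ℝ (Fin N)} {g g' h F : ℝ → ℝ} {R l : ℝ}

lemma HasRadialLap.lap_comp_normSq (a : HasRadialLap N R g g' h) (hx : ‖x‖ ^ 2 ∈ Ioo 0 R) :
    lap (fun y => g (‖y‖ ^ 2)) x = h (‖x‖ ^ 2) := by
  obtain ⟨g'', hg, hh⟩ := a.exists_hasDerivAt _ hx
  rw [_root_.lap_comp_normSq (eventually_of_mem (isOpen_Ioo.mem_nhds hx) a.hasDerivAt) hg, hh]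

lemma HasRadialBilap.biharm_comp_normSq (a : HasRadialBilap N R g g' F)
    (hx : ‖x‖ ^ 2 ∈ Ioo 0 R) : biharm (fun y => g (‖y‖ ^ 2)) x = F (‖x‖ ^ 2) := by
  obtain ⟨h, h', hg, hh⟩ := a
  have hlap : lap (fun y => g (‖y‖ ^ 2)) =ᶠ[𝓝 x] fun y => h (‖y‖ ^ 2) := by
    filter_upwards [((continuous_norm.pow 2).tendsto x).eventually (isOpen_Ioo.mem_nhds hx)]
      with y hy using hg.lap_comp_normSq hy
  rw [biharm, lap_congr hlap, hh.lap_comp_normSq hx]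

lemma normSq_mem_Ico (hx : x ∈ ball 0 1) : ‖x‖ ^ 2 ∈ Ico (0 : ℝ) 1 :=
  ⟨sq_nonneg _, pow_lt_one₀ (norm_nonneg x) (mem_ball_zero_iff.1 hx) two_ne_zero⟩

lemma HasRadialBilap.biharm_comp_normSq_of_mem_ball (hN : 1 ≤ N)
    (a : HasRadialBilap N 1 g g' F) (hg : ContDiff ℝ 4 g) (hF : ContinuousAt F 0)
    (hx : x ∈ ball 0 1) :
    biharm (fun y => g (‖y‖ ^ 2)) x = F (‖x‖ ^ 2) := by
  have hpos {y : EuclideanSpace ℝ (Fin N)} (hy : y ≠ 0) (hy1 : y ∈ ball 0 1) :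
      ‖y‖ ^ 2 ∈ Ioo (0 : ℝ) 1 := ⟨by positivity, (normSq_mem_Ico hy1).2⟩
  rcases ne_or_eq x 0 with hx0 | rfl
  · exact a.biharm_comp_normSq (hpos hx0 hx)
  have : Nonempty (Fin N) := ⟨⟨0, hN⟩⟩
  have hcont : ContinuousAt (biharm fun y : EuclideanSpace ℝ (Fin N) => g (‖y‖ ^ 2)) 0 :=
    (contDiff_lap (m := 0) (contDiff_lap (m := 2) (hg.comp (contDiff_norm_sq ℝ))
      (by norm_num)) (by norm_num)).continuous.continuousAt
  have hF' : ContinuousAt (fun y : EuclideanSpace ℝ (Fin N) => F (‖y‖ ^ 2)) 0 :=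
    ContinuousAt.comp (by simpa) (by fun_prop)
  refine ((hcont.eventuallyEq_nhds_iff_eventuallyEq_nhdsNE hF').1 ?_).self_of_nhds
  filter_upwards [self_mem_nhdsWithin, mem_nhdsWithin_of_mem_nhds (ball_mem_nhds 0 one_pos)]
    with y hy hy1 using a.biharm_comp_normSq (hpos hy hy1)

lemma IsRadialSolution.isClassicalSolution (hN : 1 ≤ N) (a : IsRadialSolution N l g (deriv g))
    (hl : 0 < l) (hg : ContDiff ℝ 4 g) :
    IsClassicalSolution N l fun x => g (‖x‖ ^ 2) where
  contDiffOn := (hg.comp (contDiff_norm_sq ℝ)).contDiffOn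
  pos x hx := by
    refine a.bilap.pos_of_pos (by positivity) hl (fun t ht => ?_) a.continuousOn a.map_one
      a.tendsto_deriv (normSq_mem_Ico hx)
    have h1 : 0 < 1 - g t := sub_pos.2 (a.lt_one t (Ioo_subset_Ico_self ht))
    have h0 := a.nonneg hl.le (Ioo_subset_Icc_self ht)
    exact le_div_self hl.le (by positivity) (pow_le_one₀ h1.le (by linarith))
  lt_one x hx := a.lt_one _ (normSq_mem_Ico hx)
  eqn x hx := by
    have h1 : 1 - g 0 ≠ 0 := (sub_pos.2 (a.lt_one 0 ⟨le_rfl, one_pos⟩)).ne'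
    refine a.bilap.biharm_comp_normSq_of_mem_ball hN hg ?_ hx
    exact continuousAt_const.div ((continuousAt_const.sub hg.continuous.continuousAt).pow 2)
      (pow_ne_zero 2 h1)
  bdry x hx := by simp [hx, a.map_one]
  bdry_deriv x hx := by
    have hderiv : deriv g (‖x‖ ^ 2) = 0 := by
      rw [hx, one_pow]
      exact tendsto_nhds_unique ((hg.continuous_deriv (by norm_num)).tendsto 1 |>.mono_left
        nhdsWithin_le_nhds) a.tendsto_deriv
    have hfd := hasFDerivAt_comp_normSq (hg.differentiable (by norm_num) (‖x‖ ^ 2)).hasDerivAt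
    rw [hfd.hasFDerivWithinAt.fderivWithin (uniqueDiffOn_closedBall 0 one_pos x
      (mem_closedBall_zero_iff.2 hx.le)), hderiv, zero_smul, zero_apply]

lemma lipschitzWith_div_max_sq (l : ℝ≥0) :
    LipschitzWith (16 * l) fun s : ℝ => l / max (1 - s) (1 / 2) ^ 2 := by
  refine .of_dist_le_mul fun s t => ?_
  set a := max (1 - s) (1 / 2)
  set b := max (1 - t) (1 / 2)
  have ha : 1 / 2 ≤ a := le_max_right _ _
  have hb : 1 / 2 ≤ b := le_max_right _ _
  have hdist : |b - a| ≤ |s - t| := by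
    simpa [a, b] using abs_max_sub_max_le_abs (1 - t) (1 - s) (1 / 2)
  have hcoeff : (a + b) / (a ^ 2 * b ^ 2) ≤ 16 := by
    have hsum : a + b ≤ 4 * (a * b) := by nlinarith
    have hprod : 1 / 4 ≤ a * b := by nlinarith
    rw [div_le_iff₀ (by positivity)]
    nlinarith [hprod]
  calc |l / a ^ 2 - l / b ^ 2| = l * ((a + b) / (a ^ 2 * b ^ 2)) * |b - a| := by
        rw [← abs_of_nonneg (a := l * ((a + b) / (a ^ 2 * b ^ 2))) (by positivity), ← abs_mul]
        congr 1
        field_simp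
        ring
    _ ≤ l * 16 * |s - t| := by gcongr
    _ = (16 * l : ℝ≥0) * dist s t := by rw [Real.dist_eq]; push_cast; ring

/- The truncated nonlinearity `l / max (1 - s) (1 / 2) ^ 2` is globally Lipschitz, and for small `l`
the fixed point does not see the truncation. -/
lemma exists_le_half_eq_mul_radialGreen {b : ℝ → ℝ} (hR : 1 ≤ R) (hb : ∀ t, |b t| ≤ 1)
    (hbc : Continuous b) (hbR : ∀ t, t ∉ Icc (-R) R → b t = 0) (n : ℕ) {l : ℝ≥0}
    (hl : 32 * R ^ 2 * l < 1) :
    ∃ w : ℝ → ℝ, Continuous w ∧ (∀ t, w t ≤ 1 / 2) ∧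
      ∀ t, w t = b t * radialGreen n (fun s => l / (1 - w s) ^ 2) t := by
  obtain ⟨w, hw⟩ := exists_eq_mul_radialGreen hR hb hbc hbR n (lipschitzWith_div_max_sq l)
    (by push_cast; linarith)
  have hbound (s : ℝ) : |l / max (1 - s) (1 / 2) ^ 2| ≤ 4 * l := by
    calc |l / max (1 - s) (1 / 2) ^ 2| = l / max (1 - s) (1 / 2) ^ 2 :=
          abs_of_nonneg (by positivity)
      _ ≤ l / (1 / 2) ^ 2 := by gcongr; exact le_max_right _ _
      _ = 4 * l := by ring
  have hw2 (t : ℝ) : w t ≤ 1 / 2 := by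
    rw [hw]
    exact (le_abs_self _).trans ((abs_mul_radialGreen_le hR hb hbR n (fun s => hbound (w s))
      t).trans (by linarith))
  refine ⟨w, w.continuous, hw2, fun t => ?_⟩
  conv_lhs => rw [hw]
  congr 2 with s
  rw [max_eq_left (by linarith [hw2 s])]

lemma contDiff_div_sq_of_eq_mul_radialGreen {b w : ℝ → ℝ} {n : ℕ} (hb : ContDiff ℝ 2 b)
    (hw : Continuous w) (hw1 : ∀ t, w t < 1)
    (hwb : ∀ t, w t = b t * radialGreen n (fun s => l / (1 - w s) ^ 2) t) :
    ContDiff ℝ 2 fun s => l / (1 - w s) ^ 2 := by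
  have hsmooth {m : ℕ} (hm : ContDiff ℝ m w) : ContDiff ℝ m fun s => l / (1 - w s) ^ 2 :=
    contDiff_const.div ((contDiff_const.sub hm).pow 2) fun s =>
      pow_ne_zero 2 (sub_pos.2 (hw1 s)).ne'
  refine hsmooth (m := 2) ?_
  rw [funext hwb]
  exact hb.mul (contDiff_radialGreen (m := 0) (hsmooth (contDiff_zero.2 hw)))

lemma exists_contDiff_isRadialSolution (n : ℕ) :
    ∃ l > 0, ∃ g, ContDiff ℝ 4 g ∧ IsRadialSolution (n + 1) l g (deriv g) := by
  let b : ContDiffBump (0 : ℝ) := ⟨1, 2, one_pos, one_lt_two⟩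
  have hb (t : ℝ) : |b t| ≤ 1 := by simpa only [abs_of_nonneg b.nonneg] using b.le_one
  have hb0 (t : ℝ) (ht : t ∉ Icc (-2 : ℝ) 2) : b t = 0 := by
    rw [mem_Icc, ← abs_le, not_le] at ht
    exact b.zero_of_le_dist (by simpa using ht.le)
  have hb1 (t : ℝ) (ht : t ∈ Icc (0 : ℝ) 1) : b t = 1 :=
    b.one_of_mem_closedBall (by simpa [abs_of_nonneg ht.1] using ht.2)
  obtain ⟨w, hwc, hw2, hw⟩ := exists_le_half_eq_mul_radialGreen one_le_two hb b.continuous hb0 n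
    (l := 1 / 256) (by norm_num)
  have hw1 (t : ℝ) : w t < 1 := by linarith [hw2 t]
  have hf := contDiff_div_sq_of_eq_mul_radialGreen b.contDiff hwc hw1 hw
  set f : ℝ → ℝ := fun s => ((1 / 256 : ℝ≥0) : ℝ) / (1 - w s) ^ 2
  have hg : ContDiff ℝ 4 (radialGreen n f) := contDiff_radialGreen (m := 2) hf
  have hgw (t : ℝ) (ht : t ∈ Icc (0 : ℝ) 1) : radialGreen n f t = w t := by
    rw [hw, hb1 t ht, one_mul]
  have hderiv := funext fun t => (hasDerivAt_radialGreen n hf.continuous t).deriv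
  refine ⟨(1 / 256 : ℝ≥0), by norm_num, radialGreen n f, hg, ?_, hg.continuous.continuousOn,
    fun t ht => ?_, radialGreen_one n f, ?_⟩
  · rw [hderiv]
    exact (hasRadialBilap_radialGreen n (hf.of_le one_le_two) 1).congr fun t ht => by
      rw [hgw t (Ioo_subset_Icc_self ht)]
  · rw [hgw t (Ico_subset_Icc_self ht)]
    exact hw1 t
  · exact deriv_radialGreen_one n hf.continuous ▸
      ((hg.continuous_deriv (by norm_num)).tendsto 1).mono_left nhdsWithin_le_nhds

lemma solSet_nonempty (hN : 1 ≤ N) : (solSet N).Nonempty := by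
  obtain ⟨n, rfl⟩ := Nat.exists_eq_add_of_le' hN
  obtain ⟨l, hl, g, hg, hsol⟩ := exists_contDiff_isRadialSolution n
  exact ⟨l, hl, _, IsRadialSolution.isClassicalSolution hN (mod_cast hsol) hl hg⟩

end Existence

section Extremal

variable {N : ℕ}

lemma lamBar_pos (hN : 3 ≤ N) : 0 < lamBar N := by
  have hN' : (3 : ℝ) ≤ N := mod_cast hN
  exact mul_pos (mul_pos (by norm_num) (by linarith)) (by linarith)

lemma sSup_solSet_pos (hN : 1 ≤ N) : 0 < sSup (solSet N) :=
  let ⟨_, hl⟩ := solSet_nonempty hN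
  hl.1.trans_le (le_csSup (bddAbove_solSet N) hl)

lemma rpow_one_third_pow_three_mul {a b : ℝ} (ha : 0 ≤ a) (hb : 0 < b) :
    ((a / b) ^ ((1 : ℝ) / 3)) ^ 3 * b = a := by
  rw [← Real.rpow_natCast, ← Real.rpow_mul (div_nonneg ha hb.le)]
  norm_num [div_mul_cancel₀ a hb.ne']

theorem singular_extremal_lower_estimate_general (N : ℕ) (hN : 3 ≤ N)
    (uMin : ℝ → EuclideanSpace ℝ (Fin N) → ℝ)
    (hMin : ∀ lam : ℝ, 0 < lam → lam < sSup (solSet N) →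
      IsClassicalSolution N lam (uMin lam) ∧
        ∀ v, IsClassicalSolution N lam v →
          ∀ x ∈ ball (0 : EuclideanSpace ℝ (Fin N)) 1, uMin lam x ≤ v x)
    (hMono : ∀ x ∈ ball (0 : EuclideanSpace ℝ (Fin N)) 1, ∀ l₁ l₂ : ℝ,
      0 < l₁ → l₁ ≤ l₂ → l₂ < sSup (solSet N) → uMin l₁ x ≤ uMin l₂ x)
    (uStar : EuclideanSpace ℝ (Fin N) → ℝ)
    (hStar : ∀ x ∈ ball (0 : EuclideanSpace ℝ (Fin N)) 1,
      Tendsto (fun lam => uMin lam x) (𝓝[<] sSup (solSet N)) (𝓝 (uStar x))) :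
    ∀ x ∈ ball (0 : EuclideanSpace ℝ (Fin N)) 1,
      sSup (uStar '' ball (0 : EuclideanSpace ℝ (Fin N)) 1) - uStar x ≤
        (sSup (solSet N) / lamBar N) ^ ((1 : ℝ) / 3) * ‖x‖ ^ ((4 : ℝ) / 3) := by
  intro x hx
  set L := sSup (solSet N)
  have hL : 0 < L := sSup_solSet_pos (by omega)
  have hbar : 0 < lamBar N := lamBar_pos hN
  have hsol {l : ℝ} (hl : l ∈ Ioo 0 L) : IsClassicalSolution N l (uMin l) := (hMin l hl.1 hl.2).1
  have hrad {l : ℝ} (hl : l ∈ Ioo 0 L) : IsRadialOnBall (uMin l) :=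
    (hsol hl).isRadialOnBall_of_forall_le (hMin l hl.1 hl.2).2
  have hcenter : ∀ y ∈ ball 0 1, uStar y ≤ uStar 0 := fun y hy => by
    refine le_of_tendsto_of_tendsto (hStar y hy) (hStar 0 (mem_ball_self one_pos)) ?_
    filter_upwards [Ioo_mem_nhdsLT hL] with l hl
    exact (hsol hl).le_center (by omega) hl.1.le (hrad hl) hy
  have hestimate : uStar 0 - uStar x ≤ (L / lamBar N) ^ ((1 : ℝ) / 3) * ‖x‖ ^ ((4 : ℝ) / 3) := by
    refine le_of_tendsto ((hStar 0 (mem_ball_self one_pos)).sub (hStar x hx)) ?_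
    filter_upwards [Ioo_mem_nhdsLT hL] with l hl
    obtain ⟨l', hl', hl'L⟩ := exists_between hl.2
    have hl'0 : l' ∈ Ioo 0 L := ⟨hl.1.trans hl', hl'L⟩
    refine (hsol hl).center_sub_le hN (hrad hl) (hsol hl'0) (hrad hl'0) hl.1.le hl'
      (fun y hy => hMono y hy l l' hl.1 hl'.le hl'L) (by positivity) ?_ hx
    exact hl.2.le.trans_eq (rpow_one_third_pow_three_mul hL.le hbar).symm
  have hsup : sSup (uStar '' ball 0 1) ≤ uStar 0 :=
    csSup_le ((nonempty_ball.2 one_pos).image _) (forall_mem_image.2 hcenter)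
  linarith

end Extremal

/-- for N ≥ 5, if u* is singular then 1 - u*(x) ≤ C₀|x|^{4/3} on B,
where C₀ = (λ*/λ̄_N)^{1/3}. -/
theorem singular_extremal_lower_estimate (N : ℕ) (hN : 5 ≤ N)
    (uMin : ℝ → EuclideanSpace ℝ (Fin N) → ℝ)
    (hMin : ∀ lam : ℝ, 0 < lam → lam < sSup (solSet N) →
      IsClassicalSolution N lam (uMin lam) ∧
        ∀ v, IsClassicalSolution N lam v →
          ∀ x ∈ ball (0 : EuclideanSpace ℝ (Fin N)) 1, uMin lam x ≤ v x)
    (hMono : ∀ x ∈ ball (0 : EuclideanSpace ℝ (Fin N)) 1, ∀ l₁ l₂ : ℝ,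
      0 < l₁ → l₁ ≤ l₂ → l₂ < sSup (solSet N) → uMin l₁ x ≤ uMin l₂ x)
    (uStar : EuclideanSpace ℝ (Fin N) → ℝ)
    (hStar : ∀ x ∈ ball (0 : EuclideanSpace ℝ (Fin N)) 1,
      Tendsto (fun lam => uMin lam x) (nhdsWithin (sSup (solSet N)) (Iio (sSup (solSet N))))
        (nhds (uStar x)))
    :
    sSup (uStar '' ball (0 : EuclideanSpace ℝ (Fin N)) 1) = 1 →
      ∀ x ∈ ball (0 : EuclideanSpace ℝ (Fin N)) 1,
        1 - uStar x ≤ (sSup (solSet N) / lamBar N) ^ ((1 : ℝ) / 3) * ‖x‖ ^ ((4 : ℝ) / 3) := by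
  intro hsing x hx
  simpa only [hsing] using
    singular_extremal_lower_estimate_general N (by omega) uMin hMin hMono uStar hStar x hx
end

section
/- Let N ≥ 31. Then the pull-in voltage of (P)_λ on the unit ball satisfies λ* ≤ 27 λ̄_N = 24(N−2/3)(N−8/3). -/
open MeasureTheory Metric Set Filter

/-
Write `M k U r = ∫_B U(r x) (1 - |x|²)^k dx`. Since `∇(1 - |x|²)^(k+1) = -2(k+1)(1 - |x|²)^k x`,
integration by parts turns the radial derivative of `M k U` into a moment of `ΔU`; in the variable
`t = r²` this reads `d/dt M k U √t = M (k+1) (ΔU) √t / (4(k+1))`. So the second derivative of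
`f(t) = M 0 u √t` is `M 2 (Δ²u) √t / 32`, and if `Δ²u ≥ c` and `m k` is the total mass of
`(1 - |x|²)^k` on `B`, then `f(t) - c (m 2) t² / 64` is convex on `[0, 1]`. As `u ≥ 0` vanishes on
`∂B`, the left slope of `f` at `1` is at most `0`, and therefore
`c (m 2) / 64 ≤ f(0) - f(1) ≤ u(0) (m 0)`. With `8 (m 0) = (N + 2)(N + 4)(m 2)` this is
`c ≤ 8(N + 2)(N + 4) u(0)`. A classical solution of `(P)_λ` satisfies `Δ²u ≥ λ` and `u(0) < 1`, so
`λ ≤ 8(N + 2)(N + 4)`, which is below `27 λ̄_N` as soon as `N ≥ 9`.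
-/

open scoped Topology RealInnerProductSpace

section BallWeight

/-- The weight `(1 - ‖x‖²)^k` of the unit ball. The minimum makes it vanish outside the ball for
`k ≥ 1`, so that it is Lipschitz on the whole space. -/
noncomputable def ballWeight {E : Type*} [Norm E] (k : ℕ) (x : E) : ℝ :=
  (1 - min ‖x‖ 1 ^ 2) ^ k

section NormedGroup

variable {E : Type*} [SeminormedAddCommGroup E] {x : E}

lemma ballWeight_of_norm_le_one (hx : ‖x‖ ≤ 1) (k : ℕ) :
    ballWeight k x = (1 - ‖x‖ ^ 2) ^ k := by
  rw [ballWeight, min_eq_left hx]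

lemma ballWeight_succ_of_one_le_norm (hx : 1 ≤ ‖x‖) (k : ℕ) : ballWeight (k + 1) x = 0 := by
  simp [ballWeight, min_eq_right hx]

lemma min_norm_one_mem_Icc (x : E) : min ‖x‖ 1 ∈ Icc (0 : ℝ) 1 :=
  ⟨le_min (norm_nonneg x) zero_le_one, min_le_right _ _⟩

lemma ballWeight_nonneg (k : ℕ) (x : E) : 0 ≤ ballWeight k x :=
  have h := min_norm_one_mem_Icc x
  pow_nonneg (sub_nonneg.2 (pow_le_one₀ h.1 h.2)) k

lemma ballWeight_le_one (k : ℕ) (x : E) : ballWeight k x ≤ 1 :=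
  have h := min_norm_one_mem_Icc x
  pow_le_one₀ (sub_nonneg.2 (pow_le_one₀ h.1 h.2)) (sub_le_self 1 (sq_nonneg _))

lemma exists_lipschitzWith_ballWeight (k : ℕ) :
    ∃ D, LipschitzWith D (ballWeight k : E → ℝ) := by
  have hpow : LocallyLipschitz (fun t : ℝ => (1 - t ^ 2) ^ k) :=
    ContDiff.locallyLipschitz (𝕂 := ℝ) (by fun_prop)
  obtain ⟨K, hK⟩ := hpow.locallyLipschitzOn.exists_lipschitzOnWith_of_compact
    (isCompact_Icc (a := (0 : ℝ)) (b := 1))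
  have hmin : LipschitzWith 1 (fun x : E => min ‖x‖ 1) := lipschitzWith_one_norm.min_const 1
  exact ⟨K * 1, lipschitzOnWith_univ.1 <|
    hK.comp hmin.lipschitzOnWith fun x _ => min_norm_one_mem_Icc x⟩

@[fun_prop]
lemma continuous_ballWeight (k : ℕ) : Continuous (ballWeight k : E → ℝ) := by
  unfold ballWeight
  fun_prop

end NormedGroup

section InnerProductSpace

variable {E : Type*} [NormedAddCommGroup E] [InnerProductSpace ℝ E] {x : E}

lemma hasLineDerivAt_ballWeight_succ (hx : ‖x‖ < 1) (k : ℕ) (v : E) :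
    HasLineDerivAt ℝ (ballWeight (k + 1)) (-(2 * (k + 1) * (⟪x, v⟫ * ballWeight k x))) x v := by
  have heq : (ballWeight (k + 1) : E → ℝ) =ᶠ[𝓝 x] fun y => (1 - ‖y‖ ^ 2) ^ (k + 1) := by
    filter_upwards [(isOpen_lt continuous_norm continuous_const).mem_nhds hx] with y hy
    exact ballWeight_of_norm_le_one (le_of_lt hy) _
  have hpow := ((hasStrictFDerivAt_norm_sq x).hasFDerivAt.const_sub 1).pow (k + 1)
  convert (hpow.congr_of_eventuallyEq heq).hasLineDerivAt v using 1
  simp [ballWeight_of_norm_le_one hx.le]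
  ring

lemma hasLineDerivAt_ballWeight_succ_of_one_lt_norm (hx : 1 < ‖x‖) (k : ℕ) (v : E) :
    HasLineDerivAt ℝ (ballWeight (k + 1)) 0 x v := by
  have heq : (ballWeight (k + 1) : E → ℝ) =ᶠ[𝓝 x] fun _ => 0 := by
    filter_upwards [(isOpen_lt continuous_const continuous_norm).mem_nhds hx] with y hy
    exact ballWeight_succ_of_one_le_norm (le_of_lt hy) k
  exact ((hasFDerivAt_const (𝕜 := ℝ) (0 : ℝ) x).congr_of_eventuallyEq heq).hasLineDerivAt v

end InnerProductSpace

end BallWeight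

section Dilation

variable {E : Type*} [SeminormedAddCommGroup E] [NormedSpace ℝ E] {r : ℝ}

lemma smul_mem_ball_zero_one {x : E} (hr : |r| < 1) (hx : ‖x‖ ≤ 1) : r • x ∈ ball (0 : E) 1 := by
  rw [mem_ball_zero_iff, norm_smul, Real.norm_eq_abs]
  exact (mul_le_of_le_one_right (abs_nonneg r) hx).trans_lt hr

lemma smul_mem_closedBall_zero_one {x : E} (hr : |r| ≤ 1) (hx : ‖x‖ ≤ 1) :
    r • x ∈ closedBall (0 : E) 1 := by
  rw [mem_closedBall_zero_iff, norm_smul, Real.norm_eq_abs]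
  exact mul_le_one₀ hr (norm_nonneg x) hx

lemma continuousOn_comp_smul_closedBall {F : Type*} [TopologicalSpace F] {g : E → F}
    (hg : ContinuousOn g (ball 0 1)) (hr : |r| < 1) :
    ContinuousOn (fun x => g (r • x)) (closedBall 0 1) :=
  hg.comp (by fun_prop) fun _ hx => smul_mem_ball_zero_one hr (mem_closedBall_zero_iff.1 hx)

end Dilation

section Integration

variable {E : Type*} [NormedAddCommGroup E] [InnerProductSpace ℝ E] [FiniteDimensional ℝ E]
  [MeasurableSpace E] [BorelSpace E] {u : E → ℝ} {r : ℝ}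

lemma integrableOn_ball_of_continuousOn_closedBall {f : E → ℝ} {x : E} {R : ℝ}
    (hf : ContinuousOn f (closedBall x R)) : IntegrableOn f (ball x R) :=
  (hf.integrableOn_compact (isCompact_closedBall x R)).mono_set ball_subset_closedBall

theorem integral_lineDeriv_mul_ballWeight_succ {f : E → ℝ} {C : NNReal}
    (hf : LipschitzOnWith C f (ball 0 1)) (v : E) (k : ℕ) :
    ∫ x in ball (0 : E) 1, lineDeriv ℝ f x v * ballWeight (k + 1) x
      = 2 * (k + 1) * ∫ x in ball (0 : E) 1, f x * ⟪x, v⟫ * ballWeight k x := by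
  obtain ⟨g, hg, hfg⟩ := hf.extend_real
  obtain ⟨D, hD⟩ := exists_lipschitzWith_ballWeight (E := E) (k + 1)
  have hsupp : HasCompactSupport (ballWeight (k + 1) : E → ℝ) :=
    .intro (isCompact_closedBall 0 1) fun x hx =>
      ballWeight_succ_of_one_le_norm (le_of_lt (by simpa using hx)) k
  have hsphere : ∀ᵐ x : E, x ∉ sphere (0 : E) 1 :=
    measure_eq_zero_iff_ae_notMem.1 (Measure.addHaar_sphere_of_ne_zero volume 0 one_ne_zero)
  rw [← integral_const_mul, ← integral_indicator measurableSet_ball,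
    ← integral_indicator measurableSet_ball]
  refine Eq.trans (integral_congr_ae (.of_forall fun x => ?_))
    ((hg.integral_lineDeriv_mul_eq (μ := volume) hD hsupp v).trans (integral_congr_ae ?_))
  · by_cases hx : x ∈ ball (0 : E) 1
    · rw [indicator_of_mem hx, (hfg.eventuallyEq_of_mem (isOpen_ball.mem_nhds hx)).lineDeriv_eq]
    · rw [indicator_of_notMem hx, ballWeight_succ_of_one_le_norm (by simpa using hx), mul_zero]
  · filter_upwards [hsphere] with x hxs
    rcases lt_trichotomy ‖x‖ 1 with hx | hx | hx
    · rw [indicator_of_mem (by simpa using hx), (hasLineDerivAt_ballWeight_succ hx k _).lineDeriv,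
        hfg (by simpa using hx), inner_neg_right]
      ring
    · exact absurd (by simpa using hx) hxs
    · rw [indicator_of_notMem (by simpa using hx.le),
        (hasLineDerivAt_ballWeight_succ_of_one_lt_norm hx k _).lineDeriv, zero_mul]

variable (E) in
/-- The mass `∫_B (1 - ‖x‖²)^k dx` of the weight `ballWeight k` on the unit ball `B`. -/
noncomputable def ballMass (k : ℕ) : ℝ := ∫ x in ball (0 : E) 1, ballWeight k x

lemma ballMass_zero : ballMass E 0 = volume.real (ball (0 : E) 1) := by
  simp [ballMass, ballWeight]

lemma ballMass_succ_eq_integral_inner_sq {v : E} (hv : ‖v‖ = 1) (k : ℕ) :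
    ballMass E (k + 1) = 2 * (k + 1) * ∫ x in ball (0 : E) 1, ⟪v, x⟫ ^ 2 * ballWeight k x := by
  have hderiv (x : E) : lineDeriv ℝ (innerSL ℝ v) x v = 1 := by
    rw [((innerSL ℝ v).hasFDerivAt.hasLineDerivAt v).lineDeriv]
    simp [hv]
  have h := integral_lineDeriv_mul_ballWeight_succ
    ((innerSL ℝ v).lipschitz.lipschitzOnWith (s := ball 0 1)) v k
  simpa only [hderiv, one_mul, innerSL_apply_apply, real_inner_comm v, ← sq, ballMass] using h

lemma integral_norm_sq_mul_ballWeight (k : ℕ) :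
    ∫ x in ball (0 : E) 1, ‖x‖ ^ 2 * ballWeight k x = ballMass E k - ballMass E (k + 1) := by
  rw [ballMass, ballMass, ← integral_sub]
  · refine setIntegral_congr_fun measurableSet_ball fun x hx => ?_
    have hx : ‖x‖ ≤ 1 := (mem_ball_zero_iff.1 hx).le
    simp only [ballWeight_of_norm_le_one hx]
    ring
  all_goals exact integrableOn_ball_of_continuousOn_closedBall (by fun_prop)

theorem ballMass_succ (k : ℕ) :
    (Module.finrank ℝ E + 2 * (k + 1)) * ballMass E (k + 1) = 2 * (k + 1) * ballMass E k := by
  let b := stdOrthonormalBasis ℝ E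
  have h : ∑ i, ballMass E (k + 1) = 2 * (k + 1) * (ballMass E k - ballMass E (k + 1)) :=
    calc ∑ i, ballMass E (k + 1)
        = 2 * (k + 1) * ∑ i, ∫ x in ball (0 : E) 1, ⟪b i, x⟫ ^ 2 * ballWeight k x := by
          rw [Finset.mul_sum]
          exact Finset.sum_congr rfl fun i _ =>
            ballMass_succ_eq_integral_inner_sq (b.orthonormal.norm_eq_one i) k
      _ = 2 * (k + 1) * ∫ x in ball (0 : E) 1, ‖x‖ ^ 2 * ballWeight k x := by
          rw [← integral_finsetSum _ fun i _ =>
            integrableOn_ball_of_continuousOn_closedBall (by fun_prop)]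
          simp only [← Finset.sum_mul, b.sum_sq_inner_right]
      _ = 2 * (k + 1) * (ballMass E k - ballMass E (k + 1)) := by
          rw [integral_norm_sq_mul_ballWeight]
  rw [Finset.sum_const, Finset.card_univ, Fintype.card_fin, nsmul_eq_mul] at h
  linear_combination h

lemma ballMass_zero_eq_ballMass_two :
    8 * ballMass E 0
      = (Module.finrank ℝ E + 2) * (Module.finrank ℝ E + 4) * ballMass E 2 := by
  have h₀ := ballMass_succ (E := E) 0
  have h₁ := ballMass_succ (E := E) 1
  norm_num at h₀ h₁
  linear_combination (-4) * h₀ - (Module.finrank ℝ E + 2) * h₁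

lemma ballMass_zero_pos : 0 < ballMass E 0 :=
  ballMass_zero (E := E) ▸ ENNReal.toReal_pos (measure_ball_pos volume 0 one_pos).ne'
    measure_ball_lt_top.ne

/-- The weighted moment `∫_B U(r x) (1 - ‖x‖²)^k dx` over the unit ball `B` of the dilated function
`U(r ·)`, not normalized by `ballMass E k`. -/
noncomputable def ballMoment (k : ℕ) (U : E → ℝ) (r : ℝ) : ℝ :=
  ∫ x in ball (0 : E) 1, U (r • x) * ballWeight k x

lemma ballMoment_apply_zero (k : ℕ) (U : E → ℝ) : ballMoment k U 0 = U 0 * ballMass E k := by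
  simp only [ballMoment, zero_smul, integral_const_mul, ballMass]

lemma ballMoment_zero_one (U : E → ℝ) : ballMoment 0 U 1 = ∫ x in ball (0 : E) 1, U x := by
  simp [ballMoment, ballWeight]

lemma integrableOn_comp_smul_mul_ballWeight {g : E → ℝ} (hg : ContinuousOn g (ball 0 1))
    (hr : |r| < 1) (k : ℕ) :
    IntegrableOn (fun x => g (r • x) * ballWeight k x) (ball 0 1) :=
  integrableOn_ball_of_continuousOn_closedBall <|
    (continuousOn_comp_smul_closedBall hg hr).mul (by fun_prop)

theorem continuousOn_ballMoment (hu : ContinuousOn u (closedBall 0 1)) (k : ℕ) :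
    ContinuousOn (ballMoment k u) (Icc (-1) 1) := by
  obtain ⟨M, hM⟩ := (isCompact_closedBall (0 : E) 1).exists_bound_of_continuousOn hu
  have hmem {r : ℝ} (hr : r ∈ Icc (-1 : ℝ) 1) {x : E} (hx : x ∈ ball (0 : E) 1) :
      r • x ∈ closedBall (0 : E) 1 :=
    smul_mem_closedBall_zero_one (abs_le.2 hr) (mem_ball_zero_iff.1 hx).le
  refine continuousOn_of_dominated (bound := fun _ => M) (fun r hr => ?_) (fun r hr => ?_) ?_ ?_
  · exact ((hu.comp (by fun_prop) fun x hx => hmem hr hx).mul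
      (by fun_prop)).aestronglyMeasurable measurableSet_ball
  · filter_upwards [ae_restrict_mem measurableSet_ball] with x hx
    rw [norm_mul, Real.norm_of_nonneg (ballWeight_nonneg k x)]
    exact (mul_le_of_le_one_right (norm_nonneg _) (ballWeight_le_one k x)).trans
      (hM _ (hmem hr hx))
  · exact integrableOn_ball_of_continuousOn_closedBall continuousOn_const
  · filter_upwards [ae_restrict_mem measurableSet_ball] with x hx
    exact (hu.comp (by fun_prop) fun r hr => hmem hr hx).mul continuousOn_const

theorem hasDerivAt_ballMoment (k : ℕ) {U : E → ℝ} (hU : ContDiffOn ℝ 1 U (ball 0 1))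
    (hr : |r| < 1) :
    HasDerivAt (ballMoment k U)
      (∫ x in ball (0 : E) 1, fderiv ℝ U (r • x) x * ballWeight k x) r := by
  have hU' : ContinuousOn (fderiv ℝ U) (ball 0 1) :=
    hU.continuousOn_fderiv_of_isOpen isOpen_ball le_rfl
  obtain ⟨R, hrR, hR⟩ := exists_between hr
  obtain ⟨M, hM⟩ := (isCompact_closedBall (0 : E) R).exists_bound_of_continuousOn
    (hU'.mono (closedBall_subset_ball hR))
  have hs : {s : ℝ | |s| < R} ∈ 𝓝 r := (isOpen_lt continuous_abs continuous_const).mem_nhds hrR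
  refine (hasDerivAt_integral_of_dominated_loc_of_deriv_le (bound := fun _ => M)
    (F' := fun s x => fderiv ℝ U (s • x) x * ballWeight k x) hs ?_ ?_ ?_ ?_ ?_ ?_).2
  · filter_upwards [hs] with s hs
    exact (integrableOn_comp_smul_mul_ballWeight hU.continuousOn (hs.trans hR) k).1
  · exact integrableOn_comp_smul_mul_ballWeight hU.continuousOn hr k
  · exact (integrableOn_ball_of_continuousOn_closedBall
      (((continuousOn_comp_smul_closedBall hU' hr).clm_apply continuousOn_id).mul
        (by fun_prop))).1
  · filter_upwards [ae_restrict_mem measurableSet_ball] with x hx s hs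
    have hx : ‖x‖ ≤ 1 := (mem_ball_zero_iff.1 hx).le
    have hsx : s • x ∈ closedBall (0 : E) R := by
      rw [mem_closedBall_zero_iff, norm_smul]
      exact (mul_le_of_le_one_right (norm_nonneg s) hx).trans (le_of_lt hs)
    calc ‖fderiv ℝ U (s • x) x * ballWeight k x‖
        ≤ ‖fderiv ℝ U (s • x) x‖ := by
          rw [norm_mul, Real.norm_of_nonneg (ballWeight_nonneg k x)]
          exact mul_le_of_le_one_right (norm_nonneg _) (ballWeight_le_one k x)
      _ ≤ ‖fderiv ℝ U (s • x)‖ := ContinuousLinearMap.unit_le_opNorm _ _ hx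
      _ ≤ M := hM _ hsx
  · exact integrableOn_ball_of_continuousOn_closedBall continuousOn_const
  · filter_upwards [ae_restrict_mem measurableSet_ball] with x hx s hs
    have hsx := smul_mem_ball_zero_one (hs.trans hR) (mem_ball_zero_iff.1 hx).le
    have hline : HasDerivAt (fun s : ℝ => s • x) x s := by
      simpa using (hasDerivAt_id s).smul_const x
    have hUx := (hU.contDiffAt (isOpen_ball.mem_nhds hsx)).differentiableAt one_ne_zero
    exact (hUx.hasFDerivAt.comp_hasDerivAt s hline).mul_const _

end Integration

section Laplacian

variable {N : ℕ} {U : EuclideanSpace ℝ (Fin N) → ℝ} {r t : ℝ}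

lemma contDiffOn_fderiv_single {s : Set (EuclideanSpace ℝ (Fin N))} {n m : WithTop ℕ∞}
    (hU : ContDiffOn ℝ n U s) (hs : IsOpen s) (hmn : m + 1 ≤ n) (i : Fin N) :
    ContDiffOn ℝ m (fun y => fderiv ℝ U y (EuclideanSpace.single i 1)) s :=
  (hU.fderiv_of_isOpen hs hmn).clm_apply contDiffOn_const

lemma contDiffOn_lap {s : Set (EuclideanSpace ℝ (Fin N))} {n m : WithTop ℕ∞}
    (hU : ContDiffOn ℝ n U s) (hs : IsOpen s) (hmn : m + 1 + 1 ≤ n) : ContDiffOn ℝ m (lap U) s :=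
  ContDiffOn.sum fun i _ =>
    contDiffOn_fderiv_single (contDiffOn_fderiv_single hU hs hmn i) hs le_rfl i

lemma sum_apply_single_mul (L : EuclideanSpace ℝ (Fin N) →L[ℝ] ℝ)
    (x : EuclideanSpace ℝ (Fin N)) :
    ∑ i, L (EuclideanSpace.single i 1) * x i = L x := by
  conv_rhs => rw [← (EuclideanSpace.basisFun (Fin N) ℝ).sum_repr x]
  simp [mul_comm]

lemma integral_fderiv_comp_smul_mul_ballWeight_succ {g : EuclideanSpace ℝ (Fin N) → ℝ}
    (hg : ContDiffOn ℝ 1 g (ball 0 1)) (hr : |r| < 1) (i : Fin N) (k : ℕ) :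
    r * ∫ x in ball 0 1, fderiv ℝ g (r • x) (EuclideanSpace.single i 1) * ballWeight (k + 1) x
      = 2 * (k + 1) * ∫ x in ball 0 1, g (r • x) * x i * ballWeight k x := by
  have hcomp : ContDiffOn ℝ 1 (fun x => g (r • x)) (closedBall 0 1) :=
    hg.comp (by fun_prop) fun x hx => smul_mem_ball_zero_one hr (mem_closedBall_zero_iff.1 hx)
  obtain ⟨C, hC⟩ := hcomp.exists_lipschitzOnWith one_ne_zero (convex_closedBall 0 1)
    (isCompact_closedBall 0 1)
  have hparts := integral_lineDeriv_mul_ballWeight_succ (hC.mono ball_subset_closedBall)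
    (EuclideanSpace.single i 1) k
  simp only [EuclideanSpace.inner_single_right, conj_trivial, one_mul] at hparts
  rw [← hparts, ← integral_const_mul]
  refine setIntegral_congr_fun measurableSet_ball fun x hx => ?_
  have hgx := (hg.contDiffAt (isOpen_ball.mem_nhds
    (smul_mem_ball_zero_one hr (mem_ball_zero_iff.1 hx).le))).differentiableAt one_ne_zero
  have hderiv := hgx.hasFDerivAt.comp x ((hasFDerivAt_id x).const_smul r)
  have hline := (hderiv.hasLineDerivAt (EuclideanSpace.single i 1)).lineDeriv
  simp only [Function.comp_def] at hline
  simp [hline, mul_assoc]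

theorem integral_fderiv_smul_self_mul_ballWeight (hU : ContDiffOn ℝ 2 U (ball 0 1))
    (hr : |r| < 1) (k : ℕ) :
    2 * (k + 1) * ∫ x in ball 0 1, fderiv ℝ U (r • x) x * ballWeight k x
      = r * ballMoment (k + 1) (lap U) r := by
  have hU' (i : Fin N) :=
    contDiffOn_fderiv_single (m := 1) hU isOpen_ball one_add_one_eq_two.le i
  have hU'' (i : Fin N) := contDiffOn_fderiv_single (m := 0) (hU' i) isOpen_ball (zero_add 1).le i
  calc 2 * (k + 1) * ∫ x in ball 0 1, fderiv ℝ U (r • x) x * ballWeight k x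
      = 2 * (k + 1) * ∑ i, ∫ x in ball 0 1,
          fderiv ℝ U (r • x) (EuclideanSpace.single i 1) * x i * ballWeight k x := by
        rw [← integral_finsetSum]
        · simp only [← Finset.sum_mul, sum_apply_single_mul]
        · exact fun i _ => integrableOn_ball_of_continuousOn_closedBall
            (((continuousOn_comp_smul_closedBall (hU' i).continuousOn hr).mul
              (by fun_prop)).mul (by fun_prop))
    _ = r * ∑ i, ∫ x in ball 0 1,
          fderiv ℝ (fun y => fderiv ℝ U y (EuclideanSpace.single i 1)) (r • x)
            (EuclideanSpace.single i 1) * ballWeight (k + 1) x := by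
        simp only [Finset.mul_sum, integral_fderiv_comp_smul_mul_ballWeight_succ (hU' _) hr]
    _ = r * ballMoment (k + 1) (lap U) r := by
        rw [← integral_finsetSum _ fun i _ =>
          integrableOn_comp_smul_mul_ballWeight (hU'' i).continuousOn hr (k + 1)]
        simp only [← Finset.sum_mul, ballMoment, lap]

lemma abs_sqrt_lt_one (ht : t < 1) : |√t| < 1 := by
  rwa [abs_of_nonneg t.sqrt_nonneg, Real.sqrt_lt' one_pos, one_pow]

theorem hasDerivAt_ballMoment_sqrt (hU : ContDiffOn ℝ 2 U (ball 0 1)) (ht : t ∈ Ioo (0 : ℝ) 1)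
    (k : ℕ) :
    HasDerivAt (fun t => ballMoment k U √t) (ballMoment (k + 1) (lap U) √t / (4 * (k + 1))) t := by
  have hsqrt : 0 < √t := Real.sqrt_pos.2 ht.1
  have habs := abs_sqrt_lt_one ht.2
  refine ((hasDerivAt_ballMoment k (hU.of_le one_le_two) habs).comp t
    (Real.hasDerivAt_sqrt ht.1.ne')).congr_deriv ?_
  have h := integral_fderiv_smul_self_mul_ballWeight hU habs k
  field_simp
  linear_combination 2 * h

lemma mul_ballMass_le_ballMoment {g : EuclideanSpace ℝ (Fin N) → ℝ} {c : ℝ}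
    (hg : ContinuousOn g (ball 0 1)) (hc : ∀ x ∈ ball 0 1, c ≤ g x) (hr : |r| < 1) (k : ℕ) :
    c * ballMass (EuclideanSpace ℝ (Fin N)) k ≤ ballMoment k g r := by
  rw [ballMass, ← integral_const_mul]
  refine setIntegral_mono_on (integrableOn_ball_of_continuousOn_closedBall (by fun_prop))
    (integrableOn_comp_smul_mul_ballWeight hg hr k) measurableSet_ball fun x hx => ?_
  exact mul_le_mul_of_nonneg_right
    (hc _ (smul_mem_ball_zero_one hr (mem_ball_zero_iff.1 hx).le)) (ballWeight_nonneg k x)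

theorem convexOn_ballMoment_sqrt_sub {u : EuclideanSpace ℝ (Fin N) → ℝ} {c : ℝ}
    (hu : ContDiffOn ℝ 4 u (ball 0 1)) (hcont : ContinuousOn u (closedBall 0 1))
    (hc : ∀ x ∈ ball 0 1, c ≤ biharm u x) :
    ConvexOn ℝ (Icc 0 1) fun t =>
      ballMoment 0 u √t - c * ballMass (EuclideanSpace ℝ (Fin N)) 2 / 64 * t ^ 2 := by
  set a := c * ballMass (EuclideanSpace ℝ (Fin N)) 2 with ha
  have hlap : ContDiffOn ℝ 2 (lap u) (ball 0 1) := contDiffOn_lap hu isOpen_ball (by norm_num)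
  have hbiharm : ContDiffOn ℝ 0 (biharm u) (ball 0 1) :=
    contDiffOn_lap hlap isOpen_ball (by norm_num)
  refine convexOn_of_hasDerivWithinAt2_nonneg (convex_Icc 0 1)
    (f' := fun t => ballMoment 1 (lap u) √t / 4 - a / 32 * t)
    (f'' := fun t => (ballMoment 2 (biharm u) √t - a) / 32) ?_ ?_ ?_ ?_
  · have hsqrt : MapsTo Real.sqrt (Icc 0 1) (Icc (-1) 1) := fun t ht =>
      ⟨neg_one_lt_zero.le.trans t.sqrt_nonneg, Real.sqrt_le_one.2 ht.2⟩
    exact ((continuousOn_ballMoment hcont 0).comp Real.continuous_sqrt.continuousOn hsqrt).sub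
      (by fun_prop)
  all_goals rw [interior_Icc]; intro t ht
  · refine HasDerivAt.hasDerivWithinAt <| ((hasDerivAt_ballMoment_sqrt
      (hu.of_le (by norm_num)) ht 0).sub
      ((hasDerivAt_pow 2 t).const_mul (a / 64))).congr_deriv ?_
    norm_num
    ring
  · refine HasDerivAt.hasDerivWithinAt <| (((hasDerivAt_ballMoment_sqrt hlap ht 1).div_const 4).sub
      ((hasDerivAt_id t).const_mul (a / 32))).congr_deriv ?_
    have hbi : lap (lap u) = biharm u := rfl
    norm_num [hbi]
    ring
  · have := mul_ballMass_le_ballMoment hbiharm.continuousOn hc (abs_sqrt_lt_one ht.2) 2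
    rw [← ha] at this
    linarith

end Laplacian

section Boundary

lemma eventually_norm_le_of_eq_zero_on_sphere {E F : Type*} [NormedAddCommGroup E] [NormedSpace ℝ E]
    [ProperSpace E] [NormedAddCommGroup F] {u : E → F} {ε : ℝ}
    (hu : ContinuousOn u (closedBall 0 1)) (hbdry : ∀ x, ‖x‖ = 1 → u x = 0) (hε : 0 < ε) :
    ∀ᶠ r in 𝓝[<] (1 : ℝ), ∀ x ∈ ball (0 : E) 1 \ ball 0 r, ‖u x‖ ≤ ε := by
  have hunif := (isCompact_closedBall (0 : E) 1).uniformContinuousOn_of_continuous hu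
  obtain ⟨δ, hδ, huδ⟩ := Metric.uniformContinuousOn_iff.1 hunif ε hε
  filter_upwards [Ioo_mem_nhdsLT (max_lt one_pos (sub_lt_self 1 hδ))] with r hr x ⟨hx1, hxr⟩
  rw [mem_ball_zero_iff] at hx1 hxr
  have hx0 : 0 < ‖x‖ := ((le_max_left _ _).trans_lt hr.1).trans_le (not_lt.1 hxr)
  have hproj : ‖‖x‖⁻¹ • x‖ = 1 := by
    rw [norm_smul, norm_inv, norm_norm, inv_mul_cancel₀ hx0.ne']
  have hdist : dist x (‖x‖⁻¹ • x) = 1 - ‖x‖ := by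
    have hneg : 1 - ‖x‖⁻¹ ≤ 0 := sub_nonpos.2 ((one_le_inv₀ hx0).2 hx1.le)
    rw [dist_eq_norm, show x - ‖x‖⁻¹ • x = (1 - ‖x‖⁻¹) • x by rw [sub_smul, one_smul], norm_smul,
      Real.norm_of_nonpos hneg, neg_sub, sub_one_mul, inv_mul_cancel₀ hx0.ne']
  have := huδ x (by simpa using hx1.le) (‖x‖⁻¹ • x) (by simpa using hproj.le) (by
    rw [hdist]; linarith [(le_max_right _ _).trans_lt hr.1])
  rw [hbdry _ hproj, dist_zero_right] at this
  exact this.le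

variable {E : Type*} [NormedAddCommGroup E] [InnerProductSpace ℝ E] [FiniteDimensional ℝ E]
  [MeasurableSpace E] [BorelSpace E] {u : E → ℝ} {r ε : ℝ}

lemma volume_real_ball_zero_eq (hr : 0 < r) :
    volume.real (ball (0 : E) r) = r ^ Module.finrank ℝ E * volume.real (ball (0 : E) 1) := by
  rw [measureReal_def, Measure.addHaar_ball_of_pos _ _ hr, ENNReal.toReal_mul,
    ENNReal.toReal_ofReal (by positivity), measureReal_def]

lemma volume_real_ball_sdiff_ball_le (hr0 : 0 < r) (hr1 : r ≤ 1) :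
    volume.real (ball (0 : E) 1 \ ball 0 r) ≤ Module.finrank ℝ E * ballMass E 0 * (1 - r) := by
  rw [measureReal_sdiff (ball_subset_ball hr1) measurableSet_ball measure_ball_lt_top.ne,
    volume_real_ball_zero_eq hr0, ballMass_zero]
  have hbernoulli := one_add_mul_sub_le_pow (show -1 ≤ r by linarith) (Module.finrank ℝ E)
  nlinarith [measureReal_nonneg (μ := volume) (s := ball (0 : E) 1)]

lemma setIntegral_ball_le_ballMoment_zero (hu : ∀ x ∈ ball 0 1, 0 ≤ u x) (hr0 : 0 < r)
    (hr1 : r ≤ 1) : ∫ x in ball 0 r, u x ≤ ballMoment 0 u r := by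
  have hscale : ballMoment 0 u r = (r ^ Module.finrank ℝ E)⁻¹ * ∫ x in ball 0 r, u x := by
    simpa [ballMoment, ballWeight, smul_unitBall_of_pos hr0] using
      Measure.setIntegral_comp_smul_of_pos (volume : Measure E) u (ball 0 1) hr0
  rw [hscale]
  exact le_mul_of_one_le_left
    (setIntegral_nonneg measurableSet_ball fun x hx => hu x (ball_subset_ball hr1 hx))
    ((one_le_inv₀ (pow_pos hr0 _)).2 (pow_le_one₀ hr0.le hr1))

lemma ballMoment_zero_one_sub_le (hcont : ContinuousOn u (closedBall 0 1))
    (hu : ∀ x ∈ ball 0 1, 0 ≤ u x) (hr0 : 0 < r) (hr1 : r ≤ 1)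
    (hε : ∀ x ∈ ball 0 1 \ ball 0 r, ‖u x‖ ≤ ε) :
    ballMoment 0 u 1 - ballMoment 0 u r ≤ ε * volume.real (ball (0 : E) 1 \ ball 0 r) :=
  calc ballMoment 0 u 1 - ballMoment 0 u r
      ≤ (∫ x in ball 0 1, u x) - ∫ x in ball 0 r, u x := by
        rw [ballMoment_zero_one]
        exact sub_le_sub_left (setIntegral_ball_le_ballMoment_zero hu hr0 hr1) _
    _ = ∫ x in ball 0 1 \ ball 0 r, u x :=
        (setIntegral_sdiff measurableSet_ball
          (integrableOn_ball_of_continuousOn_closedBall hcont) (ball_subset_ball hr1)).symm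
    _ ≤ ε * volume.real (ball (0 : E) 1 \ ball 0 r) :=
        (Real.le_norm_self _).trans <| norm_setIntegral_le_of_norm_le_const
          ((measure_mono sdiff_subset).trans_lt measure_ball_lt_top) hε

theorem eventually_ballMoment_zero_one_sub_le (hcont : ContinuousOn u (closedBall 0 1))
    (hu : ∀ x ∈ ball 0 1, 0 ≤ u x) (hbdry : ∀ x, ‖x‖ = 1 → u x = 0) (hε : 0 < ε) :
    ∀ᶠ r in 𝓝[<] (1 : ℝ), ballMoment 0 u 1 - ballMoment 0 u r ≤ ε * (1 - r) := by
  set C := Module.finrank ℝ E * ballMass E 0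
  have hC0 : 0 ≤ C := mul_nonneg (Nat.cast_nonneg _) ballMass_zero_pos.le
  have hε' : 0 < ε / (C + 1) := by positivity
  filter_upwards [eventually_norm_le_of_eq_zero_on_sphere hcont hbdry hε',
    Ioo_mem_nhdsLT one_pos] with r hur hr
  calc ballMoment 0 u 1 - ballMoment 0 u r
      ≤ ε / (C + 1) * volume.real (ball (0 : E) 1 \ ball 0 r) :=
        ballMoment_zero_one_sub_le hcont hu hr.1 hr.2.le hur
    _ ≤ ε / (C + 1) * ((C + 1) * (1 - r)) := by
        gcongr
        have := volume_real_ball_sdiff_ball_le (E := E) hr.1 hr.2.le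
        linarith [hr.2]
    _ = ε * (1 - r) := by field_simp

end Boundary

lemma tendsto_sqrt_nhdsLT_one : Tendsto Real.sqrt (𝓝[<] 1) (𝓝[<] 1) := by
  refine tendsto_nhdsWithin_iff.2 ⟨?_, ?_⟩
  · exact (Real.continuous_sqrt.tendsto' 1 1 Real.sqrt_one).mono_left nhdsWithin_le_nhds
  · filter_upwards [self_mem_nhdsWithin] with t ht
    exact (Real.sqrt_lt' one_pos).2 (by simpa using ht)

theorem le_sub_of_convexOn_sub_sq {f : ℝ → ℝ} {a : ℝ}
    (hf : ConvexOn ℝ (Icc 0 1) fun t => f t - a * t ^ 2)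
    (hbdry : ∀ ε > 0, ∀ᶠ t in 𝓝[<] (1 : ℝ), f 1 - f t ≤ ε * (1 - t)) : a ≤ f 0 - f 1 := by
  refine le_of_forall_pos_le_add fun ε hε => ?_
  have hle : ∀ᶠ t in 𝓝[<] (1 : ℝ), a * t ≤ f 0 - f 1 + ε := by
    filter_upwards [hbdry ε hε, Ioo_mem_nhdsLT one_pos] with t hft ht
    have hconv := hf.2 (left_mem_Icc.2 zero_le_one) (right_mem_Icc.2 zero_le_one)
      (sub_nonneg.2 ht.2.le) ht.1.le (sub_add_cancel 1 t)
    simp only [smul_eq_mul, mul_zero, mul_one, zero_add] at hconv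
    refine le_of_mul_le_mul_left ?_ (sub_pos.2 ht.2)
    linarith
  have hlim : Tendsto (fun t => a * t) (𝓝[<] (1 : ℝ)) (𝓝 a) :=
    ((continuous_const_mul a).tendsto' 1 a (mul_one a)).mono_left nhdsWithin_le_nhds
  exact le_of_tendsto hlim hle

theorem le_mul_apply_zero_of_le_biharm {N : ℕ} {u : EuclideanSpace ℝ (Fin N) → ℝ} {c : ℝ}
    (hdiff : ContDiffOn ℝ 4 u (ball 0 1)) (hcont : ContinuousOn u (closedBall 0 1))
    (hu : ∀ x ∈ ball 0 1, 0 ≤ u x) (hbdry : ∀ x, ‖x‖ = 1 → u x = 0)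
    (hc : ∀ x ∈ ball 0 1, c ≤ biharm u x) : c ≤ 8 * (N + 2) * (N + 4) * u 0 := by
  set m := ballMass (EuclideanSpace ℝ (Fin N))
  have hslope (ε : ℝ) (hε : 0 < ε) :
      ∀ᶠ t in 𝓝[<] (1 : ℝ), ballMoment 0 u √1 - ballMoment 0 u √t ≤ ε * (1 - t) := by
    filter_upwards [tendsto_sqrt_nhdsLT_one.eventually
      (eventually_ballMoment_zero_one_sub_le hcont hu hbdry hε), Ioo_mem_nhdsLT one_pos] with t h ht
    have hsqrt : t ≤ √t := Real.le_sqrt_of_sq_le (by nlinarith [ht.1, ht.2])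
    rw [Real.sqrt_one]
    exact h.trans (by gcongr)
  have hone : 0 ≤ ballMoment 0 u 1 := by
    rw [ballMoment_zero_one]
    exact setIntegral_nonneg measurableSet_ball hu
  have hcenter := le_sub_of_convexOn_sub_sq (convexOn_ballMoment_sqrt_sub hdiff hcont hc) hslope
  rw [Real.sqrt_zero, Real.sqrt_one, ballMoment_apply_zero] at hcenter
  have hmass := ballMass_zero_eq_ballMass_two (E := EuclideanSpace ℝ (Fin N))
  have hpos := ballMass_zero_pos (E := EuclideanSpace ℝ (Fin N))
  rw [finrank_euclideanSpace_fin] at hmass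
  have hm2 : 0 < m 2 := by
    refine pos_of_mul_pos_right (a := ((N : ℝ) + 2) * (N + 4)) ?_ (by positivity)
    linarith
  refine le_of_mul_le_mul_right ?_ hm2
  linear_combination 64 * hcenter + 64 * hone + 8 * u 0 * hmass

theorem IsClassicalSolution.lam_le_biharm {N : ℕ} {lam : ℝ} {u : EuclideanSpace ℝ (Fin N) → ℝ}
    (hu : IsClassicalSolution N lam u) (hlam : 0 ≤ lam) {x : EuclideanSpace ℝ (Fin N)}
    (hx : x ∈ ball 0 1) : lam ≤ biharm u x := by
  have hpos := hu.pos x hx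
  have hlt := hu.lt_one x hx
  rw [hu.eqn x hx]
  exact le_div_self hlam (pow_pos (sub_pos.2 hlt) 2) (pow_le_one₀ (by linarith) (by linarith))

theorem IsClassicalSolution.lam_le {N : ℕ} {lam : ℝ} {u : EuclideanSpace ℝ (Fin N) → ℝ}
    (hu : IsClassicalSolution N lam u) (hlam : 0 ≤ lam) : lam ≤ 8 * (N + 2) * (N + 4) * u 0 :=
  le_mul_apply_zero_of_le_biharm (hu.contDiffOn.mono ball_subset_closedBall)
    hu.contDiffOn.continuousOn (fun x hx => (hu.pos x hx).le) hu.bdry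
    fun _ hx => hu.lam_le_biharm hlam hx

theorem pullIn_le_of_dim_ge_31_general (N : ℕ) :
    ∀ lam ∈ solSet N, lam ≤ 8 * (N + 2) * (N + 4) := by
  rintro lam ⟨hlam, u, hu⟩
  exact (hu.lam_le hlam.le).trans
    (mul_le_of_le_one_right (by positivity) (hu.lt_one 0 (mem_ball_self one_pos)).le)

lemma eight_mul_le_lamBar {N : ℕ} (hN : 9 ≤ N) :
    8 * ((N : ℝ) + 2) * (N + 4) ≤ 27 * lamBar N := by
  have hN' : (9 : ℝ) ≤ N := by exact_mod_cast hN
  unfold lamBar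
  nlinarith

/-- for N ≥ 31, the pull-in voltage satisfies λ* ≤ 27 λ̄_N,
i.e. every voltage admitting a classical solution is at most `27 λ̄_N = 24(N-2/3)(N-8/3)`. -/
theorem pullIn_le_of_dim_ge_31 (N : ℕ) (hN : 31 ≤ N) :
    ∀ lam ∈ solSet N, lam ≤ 27 * lamBar N :=
  fun lam hlam => (pullIn_le_of_dim_ge_31_general N lam hlam).trans
    (eight_mul_le_lamBar (le_trans (by norm_num) hN))
end
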